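/- arXiv:math/9809080 — 7 statements merged into one kernel-verified Lean document; each statement's English description precedes it below -/
import Mathlib

section
/- Let u ∈ 𝒜 be a Haar unitary and let p = p* ∈ 𝒜 satisfy φ(p^k) = 0 for every odd k ≥ 1, and assume that the sets {u, u*} and {p} are free with respect to φ. Then b := up satisfies the alternating-word condition, i.e. φ( w_{ī₀ i₁; k₁}(b) · w_{ī₁ i₂; k₂}(b) ⋯ w_{ī_{n−1} iₙ; kₙ}(b) ) = 0 for every n ≥ 1, every i₀, i₁, …, iₙ ∈ {1,2} and every k₁, …, kₙ ≥ 1. (Lemma 3.9, implication 1° ⇒ 2°.) -/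
open scoped BigOperators
open ComplexOrder

noncomputable section

variable {A : Type*} [Ring A] [Algebra ℂ A] [StarRing A]

/-- Freeness of a family of subsets of `T` with respect to a state `φ`:
`φ` vanishes on every alternating product of centered elements, each taken from the
unital subalgebra generated by one of the sets. -/
def AreFree {T : Type*} [Ring T] [Algebra ℂ T] {ι : Type*} (φ : T → ℂ) (S : ι → Set T) :
    Prop :=
  ∀ (n : ℕ) (t : Fin (n + 1) → ι) (z : Fin (n + 1) → T),
    (∀ m, z m ∈ Algebra.adjoin ℂ (S (t m))) →
    (∀ m, φ (z m) = 0) →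
    (∀ m : Fin n, t m.castSucc ≠ t m.succ) →
    φ ((List.ofFn z).prod) = 0

/-- The elements `w_{ij;k}(b)` of Lemma 3.9 (indices shifted: `0 ↔ 1`, `1 ↔ 2`):
`w_{11;k} = (bb*)^k − φ((bb*)^k)·1`, `w_{12;k} = b(b*b)^{k−1}`,
`w_{21;k} = b*(bb*)^{k−1}`, `w_{22;k} = (b*b)^k − φ((b*b)^k)·1`. -/
def wElt (φ : A →ₗ[ℂ] ℂ) (b : A) (i j : Fin 2) (k : ℕ) : A :=
  if i = 0 then
    if j = 0 then (b * star b) ^ k - algebraMap ℂ A (φ ((b * star b) ^ k))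
    else b * (star b * b) ^ (k - 1)
  else
    if j = 0 then star b * (b * star b) ^ (k - 1)
    else (star b * b) ^ k - algebraMap ℂ A (φ ((star b * b) ^ k))

/-- The alternating-word condition (R-diagonality): for every `n ≥ 1`, all
`i₀, …, iₙ ∈ {1,2}` and all `k₁, …, kₙ ≥ 1`,
`φ(w_{ī₀i₁;k₁}(b) ⋯ w_{ī_{n−1}iₙ;kₙ}(b)) = 0`, where `ī = 3 − i`. -/
def AltWordCond (φ : A →ₗ[ℂ] ℂ) (b : A) : Prop :=
  ∀ (n : ℕ), 0 < n → ∀ (i : Fin (n + 1) → Fin 2) (k : Fin n → ℕ), (∀ m, 1 ≤ k m) →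
    φ ((List.ofFn fun m : Fin n =>
        wElt φ b (1 - i m.castSucc) (i m.succ) (k m)).prod) = 0

/-! By freeness, conjugation by `u` preserves `φ` on the algebra generated by `{p, p*}`. Hence, with
`L = (u, 1)` and `R = (u*, 1)`, one has `w_{ij;k}(up) = L_i · w_{ij;k}(p) · R_j`. In a product of
such elements with consecutive indices `ī₀ i₁`, `ī₁ i₂`, …, the factors meeting between two of the
`w_{ij;k}(p)` multiply to `R_i L_ī ∈ {u*, u}`. They never cancel, so the product alternates between
centered elements of the algebras generated by `{u, u*}` and `{p, p*}`, and freeness makes `φ`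
vanish on it. -/

theorem vecCons_mul_vecCons_one_sub {M : Type*} [MulOneClass M] (u v : M) (j : Fin 2) :
    ![v, 1] j * ![u, 1] (1 - j) = ![v, u] j := by
  fin_cases j <;> simp

section Freeness

variable {T : Type*} [Ring T] [Algebra ℂ T] {ι : Type*}

/-- `z` is a centered element of the unital algebra generated by `s`: the elements that may occur
as letters in the definition of freeness. -/
def IsCentered (φ : T → ℂ) (s : Set T) (z : T) : Prop :=
  z ∈ Algebra.adjoin ℂ s ∧ φ z = 0

/-- `IsAlternatingProd φ S t x` says that `x` is a nonempty product of centered elements, taken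
from algebras generated by members of the family `S`, with neighbours from distinct members and
the first factor from `S t`. It is the inductive form of the products on which freeness makes
`φ` vanish. -/
inductive IsAlternatingProd (φ : T → ℂ) (S : ι → Set T) : ι → T → Prop
  | single {t : ι} {z : T} (hz : IsCentered φ (S t) z) : IsAlternatingProd φ S t z
  | cons {s t : ι} {z x : T} (hz : IsCentered φ (S s) z) (hst : s ≠ t)
      (hx : IsAlternatingProd φ S t x) : IsAlternatingProd φ S s (z * x)

theorem IsAlternatingProd.exists_eq_prod_ofFn {φ : T → ℂ} {S : ι → Set T} {t : ι} {x : T}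
    (hx : IsAlternatingProd φ S t x) :
    ∃ (n : ℕ) (τ : Fin (n + 1) → ι) (z : Fin (n + 1) → T),
      τ 0 = t ∧ (∀ m, IsCentered φ (S (τ m)) (z m)) ∧
        (∀ m : Fin n, τ m.castSucc ≠ τ m.succ) ∧ x = (List.ofFn z).prod := by
  induction hx with
  | @single t z hz => exact ⟨0, fun _ => t, fun _ => z, rfl, fun _ => hz, nofun, by simp⟩
  | @cons s t z x hz hst _ ih =>
    obtain ⟨n, τ, y, rfl, hy, hτ, rfl⟩ := ih
    refine ⟨n + 1, Fin.cons s τ, Fin.cons z y, rfl, Fin.cases hz hy, ?_, by simp⟩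
    exact Fin.cases hst hτ

theorem AreFree.map_eq_zero {φ : T → ℂ} {S : ι → Set T} (h : AreFree φ S) {t : ι} {x : T}
    (hx : IsAlternatingProd φ S t x) : φ x = 0 := by
  obtain ⟨n, τ, z, -, hz, hτ, rfl⟩ := hx.exists_eq_prod_ofFn
  exact h n τ z (fun m => (hz m).1) (fun m => (hz m).2) hτ

theorem isCentered_sub_algebraMap {φ : T →ₗ[ℂ] ℂ} (hφ1 : φ 1 = 1) {s : Set T} {x : T}
    (hx : x ∈ Algebra.adjoin ℂ s) : IsCentered φ s (x - algebraMap ℂ T (φ x)) :=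
  ⟨sub_mem hx (Subalgebra.algebraMap_mem _ _), by simp [Algebra.algebraMap_eq_smul_one, hφ1]⟩

theorem AreFree.map_mul_mul {φ : T →ₗ[ℂ] ℂ} (hφ1 : φ 1 = 1) {S : ι → Set T} (h : AreFree φ S)
    {s t : ι} (hst : s ≠ t) {a b x : T} (ha : IsCentered φ (S s) a) (hb : IsCentered φ (S s) b)
    (hx : x ∈ Algebra.adjoin ℂ (S t)) : φ (a * x * b) = φ x * φ (a * b) := by
  have centered_part : φ (a * ((x - algebraMap ℂ T (φ x)) * b)) = 0 :=
    h.map_eq_zero (.cons ha hst (.cons (isCentered_sub_algebraMap hφ1 hx) hst.symm (.single hb)))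
  have decomposition : a * x * b =
      a * ((x - algebraMap ℂ T (φ x)) * b) + φ x • (a * b) := by
    simp [Algebra.algebraMap_eq_smul_one, sub_mul, mul_sub, mul_assoc]
  rw [decomposition, map_add, centered_part, zero_add, map_smul, smul_eq_mul]

variable {φ : T → ℂ} {s t : Set T} {u v : T}

theorem isAlternatingProd_mul_vecCons (hv : IsCentered φ s v) {z : T} (hz : IsCentered φ t z)
    (j : Fin 2) : IsAlternatingProd φ ![s, t] 1 (z * ![v, 1] j) := by
  have hz' : IsCentered φ (![s, t] 1) z := hz
  fin_cases j
  · exact .cons hz' one_ne_zero (.single (t := 0) hv)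
  · simpa using IsAlternatingProd.single hz'

theorem exists_isAlternatingProd_eq_prod_ofFn (hu : IsCentered φ s u) (hv : IsCentered φ s v)
    (n : ℕ) (i : Fin (n + 2) → Fin 2) (z : Fin (n + 1) → T) (hz : ∀ m, IsCentered φ t (z m)) :
    ∃ x, IsAlternatingProd φ ![s, t] 1 x ∧
      (List.ofFn fun m => ![u, 1] (1 - i m.castSucc) * z m * ![v, 1] (i m.succ)).prod =
        ![u, 1] (1 - i 0) * x := by
  induction n with
  | zero => exact ⟨_, isAlternatingProd_mul_vecCons hv (hz 0) (i 1), by simp [mul_assoc]⟩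
  | succ n ih =>
    obtain ⟨x, hx, prod_eq⟩ := ih (fun m => i m.succ) (fun m => z m.succ) (fun m => hz m.succ)
    have hlink : IsCentered φ s (![v, u] (i 1)) := by
      generalize i 1 = j
      fin_cases j
      exacts [hv, hu]
    have hx' : IsAlternatingProd φ ![s, t] 0 (![v, u] (i 1) * x) :=
      .cons hlink zero_ne_one hx
    refine ⟨z 0 * (![v, u] (i 1) * x), .cons (hz 0) one_ne_zero hx', ?_⟩
    simp only [Fin.succ_castSucc] at prod_eq
    rw [List.ofFn_succ, List.prod_cons, prod_eq, ← vecCons_mul_vecCons_one_sub u v (i 1)]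
    simp only [Fin.castSucc_zero, Fin.succ_zero_eq_one, mul_assoc]

theorem AreFree.map_prod_ofFn_eq_zero (h : AreFree φ ![s, t]) (hu : IsCentered φ s u)
    (hv : IsCentered φ s v) (n : ℕ) (i : Fin (n + 2) → Fin 2) (z : Fin (n + 1) → T)
    (hz : ∀ m, IsCentered φ t (z m)) :
    φ (List.ofFn fun m =>
      ![u, 1] (1 - i m.castSucc) * z m * ![v, 1] (i m.succ)).prod = 0 := by
  obtain ⟨x, hx, prod_eq⟩ := exists_isAlternatingProd_eq_prod_ofFn hu hv n i z hz
  rw [prod_eq]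
  generalize 1 - i 0 = j
  fin_cases j
  · have hu' : IsCentered φ (![s, t] 0) u := hu
    exact h.map_eq_zero (.cons hu' zero_ne_one hx)
  · simpa using h.map_eq_zero hx

end Freeness

theorem isCentered_wElt {φ : A →ₗ[ℂ] ℂ} (hφ1 : φ 1 = 1) {p : A}
    (hodd : ∀ k : ℕ, φ (p * (star p * p) ^ k) = 0 ∧ φ (star p * (p * star p) ^ k) = 0)
    (i j : Fin 2) (k : ℕ) : IsCentered φ {p, star p} (wElt φ p i j k) := by
  have hp : p ∈ Algebra.adjoin ℂ {p, star p} := Algebra.subset_adjoin (by simp)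
  have hp' : star p ∈ Algebra.adjoin ℂ {p, star p} := Algebra.subset_adjoin (by simp)
  unfold wElt
  split_ifs
  · exact isCentered_sub_algebraMap hφ1 (pow_mem (mul_mem hp hp') k)
  · exact ⟨mul_mem hp (pow_mem (mul_mem hp' hp) _), (hodd _).1⟩
  · exact ⟨mul_mem hp' (pow_mem (mul_mem hp hp') _), (hodd _).2⟩
  · exact isCentered_sub_algebraMap hφ1 (pow_mem (mul_mem hp' hp) k)

theorem wElt_mul_left {φ : A →ₗ[ℂ] ℂ} {u p : A} (hu : star u * u = 1) (hu' : u * star u = 1)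
    (hconj : ∀ k : ℕ, φ (u * (p * star p) ^ k * star u) = φ ((p * star p) ^ k))
    (i j : Fin 2) (k : ℕ) :
    wElt φ (u * p) i j k = ![u, 1] i * wElt φ p i j k * ![star u, 1] j := by
  have star_mul_cancel (x : A) : star u * (u * x) = x := by rw [← mul_assoc, hu, one_mul]
  have star_mul_self : star (u * p) * (u * p) = star p * p := by
    rw [star_mul, mul_assoc, star_mul_cancel]
  have mul_star_pow (l : ℕ) :
      ((u * p) * star (u * p)) ^ l = u * (p * star p) ^ l * star u := by
    rw [star_mul, ← mul_assoc, mul_assoc u p]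
    exact Units.conj_pow ⟨u, star u, hu', hu⟩ (p * star p) l
  unfold wElt
  rw [star_mul_self, mul_star_pow, mul_star_pow, hconj]
  fin_cases i <;> fin_cases j
  · simp [mul_sub, sub_mul, Algebra.algebraMap_eq_smul_one, hu']
  · simp [mul_assoc]
  · simp [mul_assoc, star_mul_cancel]
  · simp

theorem haar_unitary_mul_even_satisfies_altWordCond_general
    (φ : A →ₗ[ℂ] ℂ) (hφ1 : φ 1 = 1) (u p : A)
    (hu : star u * u = 1) (hu' : u * star u = 1)
    (hu0 : φ u = 0 ∧ φ (star u) = 0)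
    (hodd : ∀ k : ℕ, φ (p * (star p * p) ^ k) = 0 ∧ φ (star p * (p * star p) ^ k) = 0)
    (hfree : AreFree φ ![{u, star u}, {p, star p}]) :
    AltWordCond φ (u * p) := by
  have hU : IsCentered φ {u, star u} u := ⟨Algebra.subset_adjoin (by simp), hu0.1⟩
  have hU' : IsCentered φ {u, star u} (star u) := ⟨Algebra.subset_adjoin (by simp), hu0.2⟩
  have hconj (k : ℕ) : φ (u * (p * star p) ^ k * star u) = φ ((p * star p) ^ k) := by
    have hmem : (p * star p) ^ k ∈ Algebra.adjoin ℂ {p, star p} :=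
      pow_mem (mul_mem (Algebra.subset_adjoin (by simp)) (Algebra.subset_adjoin (by simp))) k
    rw [hfree.map_mul_mul hφ1 (s := 0) (t := 1) zero_ne_one hU hU' hmem, hu', hφ1, mul_one]
  rintro (_ | n) hn i k -
  · exact absurd hn (lt_irrefl 0)
  · simp only [wElt_mul_left hu hu' hconj]
    exact hfree.map_prod_ofFn_eq_zero hU hU' n i _ fun m => isCentered_wElt hφ1 hodd _ _ _

/-- Lemma 3.9, 1° ⇒ 2°: if `u` is a Haar unitary, `p = p*` has vanishing odd moments,
and `{u, u*}` is free from `{p}`, then `b = up` satisfies the alternating-word condition. -/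
theorem haar_unitary_mul_even_satisfies_altWordCond
    (φ : A →ₗ[ℂ] ℂ)
    (hφ1 : φ 1 = 1)
    (hφpos : ∀ x : A, 0 ≤ φ (star x * x))
    (hφtr : ∀ x y : A, φ (x * y) = φ (y * x))
    (u p : A)
    (hu : star u * u = 1) (hu' : u * star u = 1)
    (hHaar : ∀ n : ℕ, 1 ≤ n → φ (u ^ n) = 0 ∧ φ (star u ^ n) = 0)
    (hp : star p = p)
    (hodd : ∀ k : ℕ, Odd k → φ (p ^ k) = 0)
    (hfree : AreFree (fun x => φ x) (![{u, star u}, {p}] : Fin 2 → Set A)) :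
    AltWordCond φ (u * p) :=
  haar_unitary_mul_even_satisfies_altWordCond_general φ hφ1 u p hu hu'
    (by simpa using hHaar 1 le_rfl)
    (fun k => by simpa [hp, ← pow_two, ← pow_mul, ← pow_succ'] using hodd (2 * k + 1) ⟨k, rfl⟩)
    (by simpa [hp] using hfree)
end
end

section
/- Let (𝒜, φ) and (𝒜′, φ′) be unital complex *-algebras each equipped with a tracial state, and let b ∈ 𝒜 and c ∈ 𝒜′ both satisfy the alternating-word condition (with respect to φ and φ′ respectively). If φ((b*b)^k) = φ′((c*c)^k) for every k ≥ 1, then b and c have the same *-distribution: for every n ≥ 1 and every ε₁, …, εₙ ∈ {1, *}, φ(b^{ε₁} b^{ε₂} ⋯ b^{εₙ}) = φ′(c^{ε₁} c^{ε₂} ⋯ c^{εₙ}), where x^1 := x and x^* is the adjoint of x. (Lemma 3.9, implication 2° ⇒ 1°: the alternating-word condition together with the distribution of b*b determines the *-distribution of b.) -/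
open scoped BigOperators
open ComplexOrder

noncomputable section

/-- Selection: index `0` gives `x`, index `1` gives `star x`. -/
def sel {T : Type*} [Star T] (x : T) (i : Fin 2) : T := if i = 0 then x else star x

variable {A : Type*} [Ring A] [Algebra ℂ A] [StarRing A]

/-!
Multiplying an alternating product of the elements `w_{ij;k}(b)` on the left by `b` or `b*` gives a
linear combination of alternating products: the new letter either opens a new factor or is absorbed
by the first one, up to a scalar correcting the centring. Hence the span of the alternating
products, with the empty product `1` among them, contains all words in `b` and `b*`. Applied to the
element `(b, c)` of `A × A'` with the functional `φ ∘ fst`, this writes the words in `b` and in `c`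
with the *same* coefficients, since the scalars involved are the moments common to `b` and `c`. Thus
`(x, y) ↦ φ x - φ' y`, which kills the alternating products in `(b, c)`, kills all words in it.
-/

theorem map_mul_pow_comm {M N : Type*} [Monoid M] {f : M → N} (hf : ∀ x y, f (x * y) = f (y * x))
    (x y : M) (k : ℕ) : f ((x * y) ^ k) = f ((y * x) ^ k) := by
  cases k with
  | zero => simp only [pow_zero]
  | succ k =>
    have semiconj : SemiconjBy x ((y * x) ^ k) ((x * y) ^ k) :=
      SemiconjBy.pow_right (mul_assoc x y x).symm k
    calc f ((x * y) ^ (k + 1)) = f ((x * y) ^ k * x * y) := by rw [pow_succ, mul_assoc]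
      _ = f (x * (y * x) ^ k * y) := by rw [semiconj.eq]
      _ = f (y * (x * (y * x) ^ k)) := hf _ _
      _ = f ((y * x) ^ (k + 1)) := by rw [pow_succ', mul_assoc]

theorem map_sel {M N F : Type*} [Star M] [Star N] [FunLike F M N] [StarHomClass F M N] (f : F)
    (x : M) (s : Fin 2) : f (sel x s) = sel (f x) s := by
  simp only [sel, apply_ite f, map_star]

theorem map_prod_ofFn_sel {M N F : Type*} [Monoid M] [Star M] [Monoid N] [Star N] [FunLike F M N]
    [MonoidHomClass F M N] [StarHomClass F M N] (f : F) (x : M) {n : ℕ} (ε : Fin n → Fin 2) :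
    f (List.ofFn fun m => sel x (ε m)).prod = (List.ofFn fun m => sel (f x) (ε m)).prod := by
  simp only [map_list_prod, List.map_ofFn, Function.comp_def, map_sel]

section WElt

variable (φ : A →ₗ[ℂ] ℂ) (b : A)

theorem wElt_self (j : Fin 2) (k : ℕ) :
    wElt φ b j j k = (sel b j * sel b (1 - j)) ^ k
      - algebraMap ℂ A (φ ((sel b j * sel b (1 - j)) ^ k)) := by
  fin_cases j <;> simp [wElt, sel]

theorem wElt_one_sub (j : Fin 2) (k : ℕ) :
    wElt φ b (1 - j) j k = sel b (1 - j) * (sel b j * sel b (1 - j)) ^ (k - 1) := by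
  fin_cases j <;> simp [wElt, sel]

theorem wElt_one_sub_one (j : Fin 2) : wElt φ b (1 - j) j 1 = sel b (1 - j) := by
  rw [wElt_one_sub, Nat.sub_self, pow_zero, mul_one]

theorem sel_mul_wElt_one_sub (j : Fin 2) {k : ℕ} (hk : 1 ≤ k) :
    sel b j * wElt φ b (1 - j) j k =
      wElt φ b j j k + algebraMap ℂ A (φ ((sel b j * sel b (1 - j)) ^ k)) := by
  rw [wElt_one_sub, wElt_self, sub_add_cancel, ← mul_assoc, mul_pow_sub_one (by omega)]

theorem sel_one_sub_mul_wElt_self (j : Fin 2) (k : ℕ) :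
    sel b (1 - j) * wElt φ b j j k =
      wElt φ b (1 - j) j (k + 1) - φ ((sel b j * sel b (1 - j)) ^ k) • sel b (1 - j) := by
  rw [wElt_self, wElt_one_sub, Nat.add_sub_cancel, mul_sub, ← Algebra.commutes, ← Algebra.smul_def]

end WElt

/-- The product of the `w`-elements whose indices are read off from the sequences `i` and `k` as in
the alternating-word condition; the empty product, for `n = 0`, is `1`. -/
def altProd (φ : A →ₗ[ℂ] ℂ) (b : A) {n : ℕ} (i : Fin (n + 1) → Fin 2) (k : Fin n → ℕ) : A :=
  (List.ofFn fun m : Fin n => wElt φ b (1 - i m.castSucc) (i m.succ) (k m)).prod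

/-- The linear span of the alternating products, including `1`. -/
def altSpan (φ : A →ₗ[ℂ] ℂ) (b : A) : Submodule ℂ A :=
  Submodule.span ℂ {x | ∃ (n : ℕ) (i : Fin (n + 1) → Fin 2) (k : Fin n → ℕ),
    (∀ m, 1 ≤ k m) ∧ altProd φ b i k = x}

section Span

variable (φ : A →ₗ[ℂ] ℂ) (b : A)

theorem altProd_zero (i : Fin 1 → Fin 2) (k : Fin 0 → ℕ) : altProd φ b i k = 1 := by
  simp [altProd]

theorem altProd_succ {n : ℕ} (i : Fin (n + 2) → Fin 2) (k : Fin (n + 1) → ℕ) :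
    altProd φ b i k =
      wElt φ b (1 - i 0) (Fin.tail i 0) (k 0) * altProd φ b (Fin.tail i) (Fin.tail k) := by
  simp only [altProd, List.ofFn_succ, List.prod_cons, Fin.tail, Fin.castSucc_zero,
    Fin.succ_castSucc]

theorem altProd_cons {n : ℕ} (s : Fin 2) (l : ℕ) (i : Fin (n + 1) → Fin 2) (k : Fin n → ℕ) :
    altProd φ b (Fin.cons (1 - s) i : Fin (n + 2) → Fin 2) (Fin.cons l k : Fin (n + 1) → ℕ) =
      wElt φ b s (i 0) l * altProd φ b i k := by
  simp only [altProd_succ, Fin.cons_zero, Fin.tail_cons, sub_sub_cancel]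

variable {n : ℕ} {i : Fin (n + 1) → Fin 2} {k : Fin n → ℕ}

theorem altProd_mem_altSpan (hk : ∀ m, 1 ≤ k m) : altProd φ b i k ∈ altSpan φ b :=
  Submodule.subset_span ⟨n, i, k, hk, rfl⟩

theorem one_mem_altSpan : 1 ∈ altSpan φ b := by
  rw [← altProd_zero φ b 0 0]
  exact altProd_mem_altSpan φ b nofun

theorem wElt_mul_altProd_mem_altSpan (s : Fin 2) {l : ℕ} (hl : 1 ≤ l) (hk : ∀ m, 1 ≤ k m) :
    wElt φ b s (i 0) l * altProd φ b i k ∈ altSpan φ b := by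
  rw [← altProd_cons]
  exact altProd_mem_altSpan φ b (Fin.cases hl hk)

theorem sel_mem_altSpan (s : Fin 2) : sel b s ∈ altSpan φ b := by
  have h := wElt_mul_altProd_mem_altSpan φ b (i := fun _ : Fin 1 => 1 - s) (k := 0) s le_rfl nofun
  have hs := wElt_one_sub_one φ b (1 - s)
  rw [sub_sub_cancel] at hs
  rwa [altProd_zero, mul_one, hs] at h

theorem sel_one_sub_mul_altProd_mem_altSpan (hk : ∀ m, 1 ≤ k m) :
    sel b (1 - i 0) * altProd φ b i k ∈ altSpan φ b := by
  rw [← wElt_one_sub_one φ b (i 0)]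
  exact wElt_mul_altProd_mem_altSpan φ b _ le_rfl hk

theorem sel_mul_wElt_mul_altProd_mem_altSpan (s : Fin 2) {l : ℕ} (hl : 1 ≤ l)
    (hk : ∀ m, 1 ≤ k m) :
    sel b s * (wElt φ b (1 - s) (i 0) l * altProd φ b i k) ∈ altSpan φ b := by
  obtain rfl | rfl : s = i 0 ∨ s = 1 - i 0 := by omega
  · rw [← mul_assoc, sel_mul_wElt_one_sub φ b _ hl, add_mul, ← Algebra.smul_def]
    exact add_mem (wElt_mul_altProd_mem_altSpan φ b _ hl hk)
      (Submodule.smul_mem _ _ (altProd_mem_altSpan φ b hk))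
  · rw [sub_sub_cancel, ← mul_assoc, sel_one_sub_mul_wElt_self, sub_mul, smul_mul_assoc]
    exact sub_mem (wElt_mul_altProd_mem_altSpan φ b _ (by omega) hk)
      (Submodule.smul_mem _ _ (sel_one_sub_mul_altProd_mem_altSpan φ b hk))

theorem sel_mul_altProd_mem_altSpan (s : Fin 2) (hk : ∀ m, 1 ≤ k m) :
    sel b s * altProd φ b i k ∈ altSpan φ b := by
  obtain rfl | rfl : s = 1 - i 0 ∨ s = i 0 := by omega
  · exact sel_one_sub_mul_altProd_mem_altSpan φ b hk
  · cases n with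
    | zero =>
      rw [altProd_zero, mul_one]
      exact sel_mem_altSpan φ b _
    | succ n =>
      rw [altProd_succ]
      exact sel_mul_wElt_mul_altProd_mem_altSpan φ b _ (hk 0) fun m => hk m.succ

variable {φ b} in
theorem sel_mul_mem_altSpan (s : Fin 2) {x : A} (hx : x ∈ altSpan φ b) :
    sel b s * x ∈ altSpan φ b := by
  suffices altSpan φ b ≤ (altSpan φ b).comap (LinearMap.mulLeft ℂ (sel b s)) from this hx
  refine Submodule.span_le.2 ?_
  rintro _ ⟨n, i, k, hk, rfl⟩
  exact sel_mul_altProd_mem_altSpan φ b s hk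

theorem prod_ofFn_sel_mem_altSpan {n : ℕ} (ε : Fin n → Fin 2) :
    (List.ofFn fun m => sel b (ε m)).prod ∈ altSpan φ b := by
  induction n with
  | zero => simpa using one_mem_altSpan φ b
  | succ n ih =>
    rw [List.ofFn_succ, List.prod_cons]
    exact sel_mul_mem_altSpan _ (ih fun m => ε m.succ)

end Span

section Hom

variable {B F : Type*} [Ring B] [Algebra ℂ B] [StarRing B] [FunLike F A B] [AlgHomClass F ℂ A B]
  [StarHomClass F A B] (f : F)
  {φ : A →ₗ[ℂ] ℂ} {χ : B →ₗ[ℂ] ℂ} {b : A}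

theorem map_wElt {k : ℕ} (hmul_star : φ ((b * star b) ^ k) = χ ((f b * star (f b)) ^ k))
    (hstar_mul : φ ((star b * b) ^ k) = χ ((star (f b) * f b) ^ k)) (i j : Fin 2) :
    f (wElt φ b i j k) = wElt χ (f b) i j k := by
  unfold wElt
  split_ifs <;> simp only [map_sub, map_mul, map_pow, map_star, AlgHomClass.commutes,
    hmul_star, hstar_mul]

theorem map_altProd (hmul_star : ∀ l, 1 ≤ l → φ ((b * star b) ^ l) = χ ((f b * star (f b)) ^ l))
    (hstar_mul : ∀ l, 1 ≤ l → φ ((star b * b) ^ l) = χ ((star (f b) * f b) ^ l))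
    {n : ℕ} (i : Fin (n + 1) → Fin 2) {k : Fin n → ℕ} (hk : ∀ m, 1 ≤ k m) :
    f (altProd φ b i k) = altProd χ (f b) i k := by
  simp only [altProd, map_list_prod, List.map_ofFn, Function.comp_def,
    map_wElt f (hmul_star _ (hk _)) (hstar_mul _ (hk _))]

end Hom

section Pair

variable {A' : Type*} [Ring A'] [Algebra ℂ A'] [StarRing A'] {φ : A →ₗ[ℂ] ℂ} {φ' : A' →ₗ[ℂ] ℂ}
  {b : A} {c : A'}

theorem AltWordCond.map_altProd_eq (hb : AltWordCond φ b) (hc : AltWordCond φ' c)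
    (hone : φ 1 = φ' 1) {n : ℕ} (i : Fin (n + 1) → Fin 2) {k : Fin n → ℕ} (hk : ∀ m, 1 ≤ k m) :
    φ (altProd φ b i k) = φ' (altProd φ' c i k) := by
  cases n with
  | zero => rw [altProd_zero, altProd_zero, hone]
  | succ n => exact (hb _ n.succ_pos i k hk).trans (hc _ n.succ_pos i k hk).symm

theorem AltWordCond.map_fst_eq_map_snd_of_mem_altSpan (hb : AltWordCond φ b)
    (hc : AltWordCond φ' c) (hone : φ 1 = φ' 1)
    (hstar_mul : ∀ k : ℕ, 1 ≤ k → φ ((star b * b) ^ k) = φ' ((star c * c) ^ k))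
    (hmul_star : ∀ k : ℕ, 1 ≤ k → φ ((b * star b) ^ k) = φ' ((c * star c) ^ k))
    {x : A × A'} (hx : x ∈ altSpan (φ ∘ₗ LinearMap.fst ℂ A A') (b, c)) : φ x.1 = φ' x.2 := by
  suffices altSpan (φ ∘ₗ LinearMap.fst ℂ A A') (b, c) ≤
    LinearMap.eqLocus (φ ∘ₗ LinearMap.fst ℂ A A') (φ' ∘ₗ LinearMap.snd ℂ A A') from this hx
  refine Submodule.span_le.2 ?_
  rintro _ ⟨n, i, k, hk, rfl⟩
  have hfst : (altProd (φ ∘ₗ LinearMap.fst ℂ A A') (b, c) i k).1 = altProd φ b i k :=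
    map_altProd (StarAlgHom.fst ℂ A A') (fun _ _ => rfl) (fun _ _ => rfl) i hk
  have hsnd : (altProd (φ ∘ₗ LinearMap.fst ℂ A A') (b, c) i k).2 = altProd φ' c i k :=
    map_altProd (StarAlgHom.snd ℂ A A') hmul_star hstar_mul i hk
  rw [SetLike.mem_coe, LinearMap.mem_eqLocus, LinearMap.comp_apply, LinearMap.comp_apply,
    LinearMap.fst_apply, LinearMap.snd_apply, hfst, hsnd]
  exact hb.map_altProd_eq hc hone i hk

end Pair

theorem altWordCond_determines_star_distribution_general
    {A' : Type*} [Ring A'] [Algebra ℂ A'] [StarRing A']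
    (φ : A →ₗ[ℂ] ℂ) (φ' : A' →ₗ[ℂ] ℂ) (hone : φ 1 = φ' 1)
    (b : A) (c : A') (hb : AltWordCond φ b) (hc : AltWordCond φ' c)
    (hstar_mul : ∀ k : ℕ, 1 ≤ k → φ ((star b * b) ^ k) = φ' ((star c * c) ^ k))
    (hmul_star : ∀ k : ℕ, 1 ≤ k → φ ((b * star b) ^ k) = φ' ((c * star c) ^ k))
    (n : ℕ) (ε : Fin n → Fin 2) :
    φ ((List.ofFn fun m => sel b (ε m)).prod) = φ' ((List.ofFn fun m => sel c (ε m)).prod) := by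
  have hword := hb.map_fst_eq_map_snd_of_mem_altSpan hc hone hstar_mul hmul_star
    (prod_ofFn_sel_mem_altSpan (φ ∘ₗ LinearMap.fst ℂ A A') (b, c) ε)
  have hfst := map_prod_ofFn_sel (StarAlgHom.fst ℂ A A') (b, c) ε
  have hsnd := map_prod_ofFn_sel (StarAlgHom.snd ℂ A A') (b, c) ε
  simp only [StarAlgHom.fst_apply, StarAlgHom.snd_apply] at hfst hsnd
  rwa [hfst, hsnd] at hword

/-- Lemma 3.9, 2° ⇒ 1°: the alternating-word condition, together with the distribution of
`b*b`, determines the `*`-distribution of `b`. -/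
theorem altWordCond_determines_star_distribution
    {A' : Type*} [Ring A'] [Algebra ℂ A'] [StarRing A']
    (φ : A →ₗ[ℂ] ℂ) (φ' : A' →ₗ[ℂ] ℂ)
    (hφ1 : φ 1 = 1)
    (hφpos : ∀ x : A, 0 ≤ φ (star x * x))
    (hφtr : ∀ x y : A, φ (x * y) = φ (y * x))
    (hφ'1 : φ' 1 = 1)
    (hφ'pos : ∀ x : A', 0 ≤ φ' (star x * x))
    (hφ'tr : ∀ x y : A', φ' (x * y) = φ' (y * x))
    (b : A) (c : A')
    (hb : AltWordCond φ b) (hc : AltWordCond φ' c)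
    (hmom : ∀ k : ℕ, 1 ≤ k → φ ((star b * b) ^ k) = φ' ((star c * c) ^ k)) :
    ∀ (n : ℕ), 0 < n → ∀ ε : Fin n → Fin 2,
      φ ((List.ofFn fun m => sel b (ε m)).prod) =
        φ' ((List.ofFn fun m => sel c (ε m)).prod) := by
  intro n _ ε
  exact altWordCond_determines_star_distribution_general φ φ' (hφ1.trans hφ'1.symm) b c hb hc hmom
    (fun k hk => by rw [map_mul_pow_comm hφtr, hmom k hk, map_mul_pow_comm hφ'tr]) n ε
end
end

section
/- Let a, ξ ∈ 𝒜 and suppose the pair (ξ, ξ*) fulfills the conjugate relations for (a, a*). Set X := [[0, ξ*],[ξ, 0]] ∈ M₂(𝒜). Then X fulfills the conjugate relations for A with respect to M₂(ℂ1) and η: for every n ≥ 0 and all B₀, B₁, …, Bₙ ∈ M₂(ℂ1), φ₂(X B₀ A B₁ ⋯ A Bₙ) = Σ_{m=1}^{n} φ₂( η(E_M(B₀ A B₁ ⋯ A B_{m−1})) · Bₘ A ⋯ A Bₙ ). (First half of Proposition 3.6.) -/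
open scoped BigOperators
open ComplexOrder

noncomputable section

variable {A : Type*} [Ring A] [Algebra ℂ A] [StarRing A]

/-- The word `a_{i₁} ⋯ a_{iₙ}` in `a, a*` given by a list of indices. -/
def wordOf (a : A) (l : List (Fin 2)) : A := (l.map (sel a)).prod

/-- The pair `(ξ, ξ*)` fulfills the conjugate relations for `(a, a*)`. -/
def ConjRel (φ : A →ₗ[ℂ] ℂ) (a ξ : A) : Prop :=
  ∀ (l : List (Fin 2)) (i : Fin 2),
    φ (sel ξ i * wordOf a l) =
      ∑ m ∈ Finset.range l.length,
        (if l.getD m 0 = i then φ (wordOf a (l.take m)) * φ (wordOf a (l.drop (m + 1)))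
         else 0)

/-- 2×2 matrices over `A`. -/
abbrev M₂ (A : Type*) := Matrix (Fin 2) (Fin 2) A

/-- The state `φ₂ = tr ⊗ φ` on `M₂(𝒜)`. -/
def phi2 (φ : A →ₗ[ℂ] ℂ) (X : M₂ A) : ℂ := (φ (X 0 0) + φ (X 1 1)) / 2

/-- The matrix `A = [[0, a], [a*, 0]]`. -/
def Amat (a : A) : M₂ A := !![0, a; star a, 0]

/-- The matrix `X = [[0, ξ*], [ξ, 0]]`. -/
def Xmat (ξ : A) : M₂ A := !![0, star ξ; ξ, 0]

/-- The conditional expectation `E_M : M₂(𝒜) → M₂(ℂ1)`. -/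
def EM (φ : A →ₗ[ℂ] ℂ) (X : M₂ A) : M₂ A := Matrix.of fun i j => algebraMap ℂ A (φ (X i j))

/-- The map `η([[x₁₁,x₁₂],[x₂₁,x₂₂]]) = [[x₂₂,0],[0,x₁₁]]`. -/
def etaM (X : M₂ A) : M₂ A := !![X 1 1, 0; 0, X 0 0]

/-- Membership in `M₂(ℂ1)`, the scalar matrices. -/
def IsScalarMat (X : M₂ A) : Prop := ∀ i j, ∃ c : ℂ, X i j = algebraMap ℂ A c

/-- `chain Am [B₀, B₁, …, Bₙ] = B₀ (Am B₁) (Am B₂) ⋯ (Am Bₙ)`. -/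
def chain {T : Type*} [Ring T] (Am : T) : List T → T
  | [] => 1
  | B :: Bs => B * (Bs.map fun C => Am * C).prod

/-- `X` fulfills the conjugate relations for `Amat a` w.r.t. the matrices satisfying `P`
and the completely positive map `etaM ∘ E`. -/
def MatConjEta (φ : A →ₗ[ℂ] ℂ) (a : A) (X : M₂ A) (P : M₂ A → Prop) (E : M₂ A → M₂ A) :
    Prop :=
  ∀ l : List (M₂ A), l ≠ [] → (∀ C ∈ l, P C) →
    phi2 φ (X * chain (Amat a) l) =
      ∑ m ∈ Finset.range (l.length - 1),
        phi2 φ (etaM (E (chain (Amat a) (l.take (m + 1)))) * chain (Amat a) (l.drop (m + 1)))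

/-!
Write `A = ∑ⱼ xⱼ ⊗ Eⱼ` with scalar matrices `Eⱼ`, here `E₁ = e₁₂` and `E₂ = e₂₁`. For scalar `Bₖ`,
expanding `B₀ A B₁ ⋯ A Bₙ` produces words in the `xⱼ` with scalar matrix coefficients. Applying
`φ(ξᵢ ·)` to the entries removes each letter `xᵢ` in turn, leaving the matrix `Eᵢ` in its place:
`φ(ξᵢ B₀ A ⋯ A Bₙ) = ∑ₘ φ(B₀ A ⋯ A Bₘ₋₁) Eᵢ φ(Bₘ A ⋯ A Bₙ)`.
Since `(P e₁₂ Q)₁₂ = P₁₁ Q₂₂` and `(P e₂₁ Q)₂₁ = P₂₂ Q₁₁`, the average of the `(1,2)` entry for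
`ξ₁` and the `(2,1)` entry for `ξ₂` is the asserted identity.
-/

section Pencil

open LinearMap (mulLeft)

variable {R 𝒜 ι k l n : Type*} [CommSemiring R] [Ring 𝒜] [Algebra R 𝒜]

/-- The functional `y ↦ (φ ⊗ φ)(∂ᵢ(w) · (1 ⊗ y))`, where `∂ᵢ` is the `i`-th free difference
quotient and the word `w` in the letters `x` is given by its list of indices. -/
def diffQuotient [DecidableEq ι] (φ : 𝒜 →ₗ[R] R) (x : ι → 𝒜) (i : ι) (w : List ι) : 𝒜 →ₗ[R] R :=
  ∑ m ∈ Finset.range w.length,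
    if w[m]? = some i then
      φ ((w.take m).map x).prod • φ ∘ₗ mulLeft R ((w.drop (m + 1)).map x).prod
    else 0

/-- The functional `ψ`, thought of as `φ(ξᵢ ·)`, satisfies the conjugate relation for the `i`-th
letter of `x`. -/
def IsConjugateFunctional [DecidableEq ι] (φ ψ : 𝒜 →ₗ[R] R) (x : ι → 𝒜) (i : ι) : Prop :=
  ∀ w : List ι, ψ (w.map x).prod = diffQuotient φ x i w 1

theorem diffQuotient_append_singleton [DecidableEq ι] (φ : 𝒜 →ₗ[R] R) (x : ι → 𝒜) (i j : ι)
    (w : List ι) :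
    diffQuotient φ x i (w ++ [j]) =
      diffQuotient φ x i w ∘ₗ mulLeft R (x j) + if j = i then φ (w.map x).prod • φ else 0 := by
  ext y
  simp only [diffQuotient, List.length_append, List.length_singleton, Finset.sum_range_succ,
    LinearMap.add_apply, LinearMap.comp_apply, LinearMap.sum_apply]
  congr 1
  · refine Finset.sum_congr rfl fun m hm => ?_
    have hm : m < w.length := Finset.mem_range.mp hm
    rw [List.getElem?_append_left hm, List.take_append_of_le_length hm.le,
      List.drop_append_of_le_length hm]
    split_ifs <;> simp
  · split_ifs <;> simp_all

theorem mapMatrix_diffQuotient_append_singleton [DecidableEq ι] (φ : 𝒜 →ₗ[R] R) (x : ι → 𝒜)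
    (i j : ι) (w : List ι) (Y : Matrix k n 𝒜) :
    (diffQuotient φ x i (w ++ [j])).mapMatrix Y =
      (diffQuotient φ x i w ∘ₗ mulLeft R (x j)).mapMatrix Y +
        if j = i then φ (w.map x).prod • φ.mapMatrix Y else 0 := by
  rw [diffQuotient_append_singleton]
  split_ifs <;> ext p q <;> simp

theorem comp_mulLeft_word_comp_mulLeft (f : 𝒜 →ₗ[R] R) (x : ι → 𝒜) (w : List ι) (j : ι) :
    (f ∘ₗ mulLeft R (w.map x).prod) ∘ₗ mulLeft R (x j) =
      f ∘ₗ mulLeft R ((w ++ [j]).map x).prod := by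
  ext y
  simp

theorem mapMatrix_smul_left (f : 𝒜 →ₗ[R] R) (r : 𝒜) (Y : Matrix k n 𝒜) :
    f.mapMatrix (r • Y) = (f ∘ₗ mulLeft R r).mapMatrix Y :=
  rfl

variable [Fintype n]

theorem mapMatrix_scalar_mul (f : 𝒜 →ₗ[R] R) (b : Matrix k n R) (Y : Matrix n l 𝒜) :
    f.mapMatrix (b.map (algebraMap R 𝒜) * Y) = b * f.mapMatrix Y := by
  ext p q
  simp [Matrix.mul_apply, ← Algebra.smul_def]

variable [DecidableEq n]

theorem mul_single_one_mul_apply (P : Matrix k n R) (Q : Matrix n l R) (r s : n) (p : k) (q : l) :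
    (P * (Matrix.single r s (1 : R) * Q) : Matrix k l R) p q = P p r * Q s q := by
  rw [← Matrix.mul_assoc, Matrix.mul_apply, Finset.sum_eq_single s] <;> simp +contextual

variable [Fintype ι]

/-- The matrix `∑ⱼ xⱼ ⊗ Eⱼ` over `𝒜`, with scalar coefficient matrices `Eⱼ`. -/
def linearPencil (x : ι → 𝒜) (E : ι → Matrix n n R) : Matrix n n 𝒜 :=
  ∑ j, x j • (E j).map (algebraMap R 𝒜)

/-- The product `B₀ L B₁ ⋯ L Bₘ`, where `L` is the linear pencil of `x` and `E` and the scalar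
matrices `Bₖ` are given over the base ring. -/
def pencilChain (x : ι → 𝒜) (E : ι → Matrix n n R) (bs : List (Matrix n n R)) : Matrix n n 𝒜 :=
  chain (linearPencil x E) (bs.map fun b => b.map (algebraMap R 𝒜))

theorem mapMatrix_pencilChain_singleton (f : 𝒜 →ₗ[R] R) (x : ι → 𝒜) (E : ι → Matrix n n R)
    (b : Matrix n n R) : f.mapMatrix (pencilChain x E [b]) = f 1 • b := by
  ext p q
  simp [pencilChain, chain, Algebra.algebraMap_eq_smul_one, mul_comm]

theorem pencilChain_cons_cons (x : ι → 𝒜) (E : ι → Matrix n n R) (b c : Matrix n n R)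
    (bs : List (Matrix n n R)) :
    pencilChain x E (b :: c :: bs) =
      b.map (algebraMap R 𝒜) * (linearPencil x E * pencilChain x E (c :: bs)) := by
  simp [pencilChain, chain, mul_assoc]

theorem mapMatrix_pencilChain_cons_cons (f : 𝒜 →ₗ[R] R) (x : ι → 𝒜) (E : ι → Matrix n n R)
    (b c : Matrix n n R) (bs : List (Matrix n n R)) :
    f.mapMatrix (pencilChain x E (b :: c :: bs)) =
      ∑ j, b * (E j * (f ∘ₗ mulLeft R (x j)).mapMatrix (pencilChain x E (c :: bs))) := by
  simp only [pencilChain_cons_cons, mapMatrix_scalar_mul, linearPencil, Finset.sum_mul, map_sum,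
    smul_mul_assoc, mapMatrix_smul_left, Finset.mul_sum]

variable [DecidableEq ι] {φ ψ : 𝒜 →ₗ[R] R} {x : ι → 𝒜} {i : ι}

-- The prefix `w` collects the letters picked from the pencils already expanded, which makes the
-- claim inductive in `bs`.
theorem IsConjugateFunctional.mapMatrix_word_mul_pencilChain (h : IsConjugateFunctional φ ψ x i)
    (E : ι → Matrix n n R) (b : Matrix n n R) (bs : List (Matrix n n R)) (w : List ι) :
    (ψ ∘ₗ mulLeft R (w.map x).prod).mapMatrix (pencilChain x E (b :: bs)) =
      (diffQuotient φ x i w).mapMatrix (pencilChain x E (b :: bs)) +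
        ∑ m ∈ Finset.range bs.length,
          (φ ∘ₗ mulLeft R (w.map x).prod).mapMatrix (pencilChain x E ((b :: bs).take (m + 1))) *
            (E i * φ.mapMatrix (pencilChain x E ((b :: bs).drop (m + 1)))) := by
  induction bs generalizing b w with
  | nil =>
    simp only [mapMatrix_pencilChain_singleton, LinearMap.comp_apply, LinearMap.mulLeft_apply,
      mul_one, h w, List.length_nil, Finset.range_zero, Finset.sum_empty, add_zero]
  | cons c bs ih =>
    calc
      _ = ∑ j, b * (E j *
            (ψ ∘ₗ mulLeft R ((w ++ [j]).map x).prod).mapMatrix (pencilChain x E (c :: bs))) := by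
        simp only [mapMatrix_pencilChain_cons_cons, comp_mulLeft_word_comp_mulLeft]
      _ = ∑ j, b * (E j *
              (diffQuotient φ x i w ∘ₗ mulLeft R (x j)).mapMatrix (pencilChain x E (c :: bs))) +
            (∑ m ∈ Finset.range bs.length,
              (∑ j, b * (E j * (φ ∘ₗ mulLeft R ((w ++ [j]).map x).prod).mapMatrix
                (pencilChain x E ((c :: bs).take (m + 1))))) *
                  (E i * φ.mapMatrix (pencilChain x E ((c :: bs).drop (m + 1)))) +
              φ (w.map x).prod • b * (E i * φ.mapMatrix (pencilChain x E (c :: bs)))) := by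
        simp only [ih, mapMatrix_diffQuotient_append_singleton, mul_add, mul_ite, mul_zero,
          mul_smul_comm, smul_mul_assoc, Finset.sum_add_distrib, Finset.sum_ite_eq',
          Finset.mem_univ, if_true, Finset.mul_sum, Finset.sum_mul, mul_assoc]
        rw [Finset.sum_comm, add_assoc, add_comm (φ _ • _)]
      _ = _ := by
        rw [List.length_cons, Finset.sum_range_succ']
        simp only [List.take_succ_cons, List.drop_succ_cons, List.take_zero, List.drop_zero,
          mapMatrix_pencilChain_singleton, mapMatrix_pencilChain_cons_cons,
          comp_mulLeft_word_comp_mulLeft, LinearMap.comp_apply, LinearMap.mulLeft_apply, mul_one]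

theorem IsConjugateFunctional.mapMatrix_pencilChain (h : IsConjugateFunctional φ ψ x i)
    (E : ι → Matrix n n R) (b : Matrix n n R) (bs : List (Matrix n n R)) :
    ψ.mapMatrix (pencilChain x E (b :: bs)) =
      ∑ m ∈ Finset.range bs.length,
        φ.mapMatrix (pencilChain x E ((b :: bs).take (m + 1))) *
          (E i * φ.mapMatrix (pencilChain x E ((b :: bs).drop (m + 1)))) := by
  simpa [diffQuotient] using h.mapMatrix_word_mul_pencilChain E b bs []

end Pencil

theorem ConjRel.isConjugateFunctional {φ : A →ₗ[ℂ] ℂ} {a ξ : A} (h : ConjRel φ a ξ) (i : Fin 2) :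
    IsConjugateFunctional φ (φ ∘ₗ LinearMap.mulLeft ℂ (sel ξ i)) (sel a) i := by
  intro w
  rw [LinearMap.comp_apply, LinearMap.mulLeft_apply, diffQuotient, LinearMap.sum_apply]
  refine (h w i).trans (Finset.sum_congr rfl fun m hm => ?_)
  have hm : m < w.length := Finset.mem_range.mp hm
  rw [List.getD_eq_getElem _ _ hm, List.getElem?_eq_getElem hm]
  split_ifs <;> simp_all [wordOf]

/-- The coefficients of `Amat a = a ⊗ e₁₂ + a* ⊗ e₂₁`; `Fin.rev` swaps the two indices. -/
def offDiagUnit (i : Fin 2) : M₂ ℂ :=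
  Matrix.single i i.rev 1

theorem linearPencil_sel_offDiagUnit (a : A) : linearPencil (sel a) offDiagUnit = Amat a := by
  ext p q
  fin_cases p <;> fin_cases q <;> simp [linearPencil, offDiagUnit, sel, Amat]

theorem chain_Amat_map_algebraMap (a : A) (bs : List (M₂ ℂ)) :
    chain (Amat a) (bs.map fun b => b.map (algebraMap ℂ A)) =
      pencilChain (sel a) offDiagUnit bs := by
  rw [pencilChain, linearPencil_sel_offDiagUnit]

theorem ConjRel.map_sel_mul_pencilChain {φ : A →ₗ[ℂ] ℂ} {a ξ : A} (h : ConjRel φ a ξ) (i : Fin 2)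
    (b : M₂ ℂ) (bs : List (M₂ ℂ)) :
    φ (sel ξ i * pencilChain (sel a) offDiagUnit (b :: bs) i i.rev) =
      ∑ m ∈ Finset.range bs.length,
        φ (pencilChain (sel a) offDiagUnit ((b :: bs).take (m + 1)) i i) *
          φ (pencilChain (sel a) offDiagUnit ((b :: bs).drop (m + 1)) i.rev i.rev) := by
  have matrix_identity := (h.isConjugateFunctional i).mapMatrix_pencilChain offDiagUnit b bs
  have entry := congrFun₂ matrix_identity i i.rev
  simpa [offDiagUnit, Matrix.sum_apply, mul_single_one_mul_apply] using entry

theorem phi2_Xmat_mul (φ : A →ₗ[ℂ] ℂ) (ξ : A) (Y : M₂ A) :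
    phi2 φ (Xmat ξ * Y) = (∑ i, φ (sel ξ i * Y i i.rev)) / 2 := by
  simp [phi2, Xmat, sel, Matrix.mul_apply, add_comm]

section ScalarMatrices

variable {𝒜 : Type*} [Ring 𝒜] [Algebra ℂ 𝒜]

theorem phi2_etaM_EM_mul (φ : 𝒜 →ₗ[ℂ] ℂ) (Y Z : M₂ 𝒜) :
    phi2 φ (etaM (EM φ Y) * Z) = (∑ i, φ (Y i i) * φ (Z i.rev i.rev)) / 2 := by
  simp [phi2, etaM, EM, Matrix.mul_apply, ← Algebra.smul_def, add_comm]

theorem exists_map_algebraMap_eq_of_isScalarMat {l : List (M₂ 𝒜)}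
    (hl : ∀ C ∈ l, IsScalarMat C) :
    ∃ bs : List (M₂ ℂ), bs.map (fun b => b.map (algebraMap ℂ 𝒜)) = l := by
  rw [← Set.mem_range, Set.range_list_map]
  intro C hC
  choose b hb using hl C hC
  exact ⟨b, Matrix.ext fun p q => (hb p q).symm⟩

end ScalarMatrices

theorem conjugate_relations_matrix_of_scalar_general
    (φ : A →ₗ[ℂ] ℂ) (a ξ : A) (hconj : ConjRel φ a ξ) :
    MatConjEta φ a (Xmat ξ) IsScalarMat (EM φ) := by
  intro l hl hscalar
  obtain ⟨bs, rfl⟩ := exists_map_algebraMap_eq_of_isScalarMat hscalar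
  obtain ⟨b, bs, rfl⟩ := List.exists_cons_of_ne_nil (List.map_eq_nil_iff.not.mp hl)
  simp only [← List.map_take, ← List.map_drop, chain_Amat_map_algebraMap, List.length_map,
    List.length_cons, Nat.add_sub_cancel]
  rw [phi2_Xmat_mul]
  simp only [hconj.map_sel_mul_pencilChain, phi2_etaM_EM_mul]
  rw [Finset.sum_comm, Finset.sum_div]

/-- First half of Proposition 3.6: if `(ξ, ξ*)` is a conjugate system for `(a,a*)`, then
`X = [[0,ξ*],[ξ,0]]` fulfills the conjugate relations for `A` w.r.t. `M₂(ℂ1)` and `η`. -/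
theorem conjugate_relations_matrix_of_scalar
    (φ : A →ₗ[ℂ] ℂ)
    (hφ1 : φ 1 = 1)
    (hφpos : ∀ x : A, 0 ≤ φ (star x * x))
    (hφtr : ∀ x y : A, φ (x * y) = φ (y * x))
    (a ξ : A) (hconj : ConjRel φ a ξ) :
    MatConjEta φ a (Xmat ξ) IsScalarMat (EM φ) :=
  conjugate_relations_matrix_of_scalar_general φ a ξ hconj
end
end

section
/- Let a ∈ 𝒜 and let X ∈ M₂(𝒜) fulfill the conjugate relations for A with respect to 𝒟 and η₀: for every n ≥ 0 and all D₀, …, Dₙ ∈ 𝒟, φ₂(X D₀ A D₁ ⋯ A Dₙ) = Σ_{m=1}^{n} φ₂( η₀(E_D(D₀ A ⋯ A D_{m−1})) · Dₘ A ⋯ A Dₙ ). Then X fulfills the conjugate relations for A with respect to the scalars: φ₂(X Aⁿ) = Σ_{m=1}^{n} φ₂(A^{m−1}) φ₂(A^{n−m}) for every n ≥ 0. (One direction of Proposition 3.7.) -/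
open scoped BigOperators
open ComplexOrder

noncomputable section

variable {A : Type*} [Ring A] [Algebra ℂ A] [StarRing A]

/-- The conditional expectation `E_D : M₂(𝒜) → 𝒟` onto the scalar diagonal matrices. -/
def ED (φ : A →ₗ[ℂ] ℂ) (X : M₂ A) : M₂ A :=
  !![algebraMap ℂ A (φ (X 0 0)), 0; 0, algebraMap ℂ A (φ (X 1 1))]

/-- Membership in `𝒟`, the scalar diagonal matrices. -/
def IsDiagScalar (X : M₂ A) : Prop :=
  (∃ c : ℂ, X 0 0 = algebraMap ℂ A c) ∧ (∃ c : ℂ, X 1 1 = algebraMap ℂ A c) ∧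
    X 0 1 = 0 ∧ X 1 0 = 0

/-! When every `Dⱼ` is `1`, the conjugate relations over `𝒟` express `φ₂(X Aⁿ)` through
`φ₂(η₀(E_D(Aᵐ)) Aⁿ⁻¹⁻ᵐ)`. Since `A` has zero diagonal, the diagonal entries of `Aᵐ` are `a * y` and
`y * a` for the same `y`, so a trace does not distinguish them. Hence `E_D(Aᵐ)` is a multiple of
the identity, which `η₀` fixes, and the multiple is `φ₂(Aᵐ)`. -/

theorem trace_pow_apply_zero_zero_eq_one_one {R β : Type*} [Semiring R] (τ : R → β)
    (hτ : ∀ x y : R, τ (x * y) = τ (y * x)) (B : M₂ R) (h₀ : B 0 0 = 0) (h₁ : B 1 1 = 0) (m : ℕ) :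
    τ ((B ^ m) 0 0) = τ ((B ^ m) 1 1) := by
  cases m with
  | zero => simp
  | succ k =>
    have upper : (B ^ (k + 1)) 0 0 = B 0 1 * (B ^ k) 1 0 := by
      simp [pow_succ', Matrix.mul_apply, h₀]
    have lower : (B ^ (k + 1)) 1 1 = (B ^ k) 1 0 * B 0 1 := by
      simp [pow_succ, Matrix.mul_apply, h₁]
    rw [upper, lower, hτ]

theorem chain_replicate_one {T : Type*} [Ring T] (B : T) (k : ℕ) :
    chain B (List.replicate (k + 1) 1) = B ^ k := by
  simp [List.replicate_succ, chain]

theorem MatConjEta.phi2_mul_pow {φ : A →ₗ[ℂ] ℂ} {a : A} {X : M₂ A} {P : M₂ A → Prop}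
    {E : M₂ A → M₂ A} (hX : MatConjEta φ a X P E) (hP : P 1) (n : ℕ) :
    phi2 φ (X * Amat a ^ n) =
      ∑ m ∈ Finset.range n, phi2 φ (etaM (E (Amat a ^ m)) * Amat a ^ (n - 1 - m)) := by
  have words_of_ones := hX (List.replicate (n + 1) 1) (by simp)
    fun C hC => List.eq_of_mem_replicate hC ▸ hP
  rw [chain_replicate_one, List.length_replicate, Nat.add_sub_cancel] at words_of_ones
  refine words_of_ones.trans (Finset.sum_congr rfl fun m hm => ?_)
  have hmn : m < n := Finset.mem_range.mp hm
  rw [List.take_replicate, List.drop_replicate, min_eq_left (by omega),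
    show n + 1 - (m + 1) = n - 1 - m + 1 by omega, chain_replicate_one, chain_replicate_one]

section ScalarDiagonal

variable {R : Type*} [Ring R] [Algebra ℂ R] (φ : R →ₗ[ℂ] ℂ)

theorem phi2_smul (c : ℂ) (Y : M₂ R) : phi2 φ (c • Y) = c * phi2 φ Y := by
  simp only [phi2, Matrix.smul_apply, map_smul, smul_eq_mul]
  ring

theorem etaM_ED_eq_phi2_smul_one {Y : M₂ R} (hY : φ (Y 0 0) = φ (Y 1 1)) :
    etaM (ED φ Y) = phi2 φ Y • (1 : M₂ R) := by
  ext i j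
  fin_cases i <;> fin_cases j <;> simp [etaM, ED, phi2, hY, Algebra.algebraMap_eq_smul_one]

theorem isDiagScalar_one : IsDiagScalar (1 : M₂ R) :=
  ⟨⟨1, by simp⟩, ⟨1, by simp⟩, by simp, by simp⟩

end ScalarDiagonal

theorem conjugate_relations_scalars_of_D_general {φ : A →ₗ[ℂ] ℂ}
    (hφtr : ∀ x y : A, φ (x * y) = φ (y * x)) {a : A} {X : M₂ A} {P : M₂ A → Prop} (hP : P 1)
    (hX : MatConjEta φ a X P (ED φ)) (n : ℕ) :
    phi2 φ (X * Amat a ^ n) =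
      ∑ m ∈ Finset.range n, phi2 φ (Amat a ^ m) * phi2 φ (Amat a ^ (n - 1 - m)) := by
  rw [hX.phi2_mul_pow hP]
  refine Finset.sum_congr rfl fun m _ => ?_
  have diag_eq : φ ((Amat a ^ m) 0 0) = φ ((Amat a ^ m) 1 1) :=
    trace_pow_apply_zero_zero_eq_one_one φ hφtr (Amat a) (by simp [Amat]) (by simp [Amat]) m
  rw [etaM_ED_eq_phi2_smul_one φ diag_eq, smul_one_mul, phi2_smul]

/-- One direction of Proposition 3.7: if `X` fulfills the conjugate relations for `A` with
respect to `𝒟` and `η₀`, then `X` fulfills the conjugate relations for `A` with respect to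
the scalars. -/
theorem conjugate_relations_scalars_of_D
    (φ : A →ₗ[ℂ] ℂ)
    (hφ1 : φ 1 = 1)
    (hφpos : ∀ x : A, 0 ≤ φ (star x * x))
    (hφtr : ∀ x y : A, φ (x * y) = φ (y * x))
    (a : A) (X : M₂ A)
    (hX : MatConjEta φ a X IsDiagScalar (ED φ)) :
    ∀ n : ℕ,
      phi2 φ (X * Amat a ^ n) =
        ∑ m ∈ Finset.range n, phi2 φ (Amat a ^ m) * phi2 φ (Amat a ^ (n - 1 - m)) :=
  conjugate_relations_scalars_of_D_general hφtr isDiagScalar_one hX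
end
end

section
/- Let a, ξ ∈ 𝒜 and set X := [[0, ξ*],[ξ, 0]] ∈ M₂(𝒜). Assume that: (i) φ₂(X Aⁿ) = Σ_{m=1}^{n} φ₂(A^{m−1}) φ₂(A^{n−m}) for every n ≥ 0; and (ii) φ(ξ a (a*a)^m) = φ(ξ* a* (aa*)^m) for every m ≥ 0. Then X fulfills the conjugate relations for A with respect to 𝒟 and η₀: for every n ≥ 0 and all D₀, …, Dₙ ∈ 𝒟, φ₂(X D₀ A D₁ ⋯ A Dₙ) = Σ_{m=1}^{n} φ₂( η₀(E_D(D₀ A ⋯ A D_{m−1})) · Dₘ A ⋯ A Dₙ ). (Algebraic core of the converse direction of Proposition 3.7.) -/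
open scoped BigOperators
open ComplexOrder

noncomputable section

variable {A : Type*} [Ring A] [Algebra ℂ A] [StarRing A]

/-!
The matrices `A` and `X` are antidiagonal, so moving a matrix of `𝒟 ≅ ℂ × ℂ` past one of them swaps
its two entries. Hence `D₀ A D₁ ⋯ A Dₙ = D Aⁿ`, where `D` is the product of the `Dᵢ`, every other
one of them swapped. The symmetry (ii) says that the two diagonal entries of `X Aⁿ` have the same
`φ`, and traciality says this for `Aⁿ`; for such a matrix `M`, `φ₂(D M)` is the mean of the entries
of `D` times `φ₂(M)`. So the left side and the `m`-th summand of the relation for `𝒟` are multiples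
of those of the scalar relation (i), by the same factor if `A^{m-1}` is an even power; otherwise
`φ₂(A^{m-1}) = 0` and both summands vanish.
-/

section TwistedProduct

variable {S : Type*} [Monoid S]

/-- The product `s₀ σ(s₁) σ²(s₂) ⋯` of a list twisted by an endomorphism `σ`: the coefficient that
remains when the factors `sᵢ` of `s₀ x s₁ x s₂ ⋯` are all moved to the left of the letters `x`,
where `x s = σ(s) x`. -/
def twistedProd (σ : S →* S) : List S → S
  | [] => 1
  | s :: L => s * σ (twistedProd σ L)

theorem twistedProd_append (σ : S →* S) (L M : List S) :
    twistedProd σ (L ++ M) = twistedProd σ L * σ^[L.length] (twistedProd σ M) := by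
  induction L with
  | nil => simp [twistedProd]
  | cons s L ih =>
    rw [List.cons_append, twistedProd, ih, map_mul, ← mul_assoc, List.length_cons,
      Function.iterate_succ_apply', twistedProd]

variable {T : Type*} [Ring T] {σ : S →* S} {d : S →* T} {x : T}

theorem prod_map_mul_of_semiconjBy (hx : ∀ s, SemiconjBy x (d s) (d (σ s))) (L : List S) :
    ((L.map d).map fun y => x * y).prod = d (σ (twistedProd σ L)) * x ^ L.length := by
  induction L with
  | nil => simp [twistedProd]
  | cons s L ih =>
    calc x * d s * ((L.map d).map fun y => x * y).prod
        = x * d (s * σ (twistedProd σ L)) * x ^ L.length := by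
          rw [ih, map_mul]
          simp only [mul_assoc]
      _ = d (σ (s * σ (twistedProd σ L))) * x ^ (L.length + 1) := by
          rw [(hx _).eq, mul_assoc, pow_succ']

theorem chain_map_of_semiconjBy (hx : ∀ s, SemiconjBy x (d s) (d (σ s))) {L : List S}
    (hL : L ≠ []) : chain x (L.map d) = d (twistedProd σ L) * x ^ (L.length - 1) := by
  obtain ⟨s, L, rfl⟩ := List.exists_cons_of_ne_nil hL
  rw [List.map_cons, chain, prod_map_mul_of_semiconjBy hx, ← mul_assoc, ← map_mul, twistedProd,
    List.length_cons, Nat.add_sub_cancel]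

end TwistedProduct

section AntidiagonalPowers

variable {R : Type*} [Semiring R] (a b : R)

theorem antidiag_pow_two_mul (k : ℕ) :
    !![0, a; b, 0] ^ (2 * k) = !![(a * b) ^ k, 0; 0, (b * a) ^ k] := by
  induction k with
  | zero => simp [Matrix.one_fin_two]
  | succ k ih => simp [mul_add, pow_add, ih, pow_two]

theorem antidiag_pow_two_mul_add_one (k : ℕ) :
    !![0, a; b, 0] ^ (2 * k + 1) = !![0, a * (b * a) ^ k; b * (a * b) ^ k, 0] := by
  rw [pow_succ', antidiag_pow_two_mul]
  simp

end AntidiagonalPowers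

/-- The exchange of the two diagonal entries of an element of `𝒟 ≅ ℂ × ℂ`. It is the map `η₀`, and
also the twist that an antidiagonal matrix induces on `𝒟`. -/
def swapHom : ℂ × ℂ →* ℂ × ℂ := (MulEquiv.prodComm : ℂ × ℂ ≃* ℂ × ℂ).toMonoidHom

theorem swapHom_apply (c : ℂ × ℂ) : swapHom c = c.swap := rfl

theorem swapHom_involutive : Function.Involutive swapHom := Prod.swap_swap

/-- The mean of the two diagonal entries of an element of `𝒟 ≅ ℂ × ℂ`, that is, the normalized
trace. -/
def entryMean (c : ℂ × ℂ) : ℂ := (c.1 + c.2) / 2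

theorem entryMean_swapHom (c : ℂ × ℂ) : entryMean (swapHom c) = entryMean c := by
  simp [entryMean, swapHom_apply, add_comm]

section ScalarDiagonal

variable {R : Type*} [Ring R] [Algebra ℂ R]

/-- The identification of `ℂ × ℂ` with the scalar diagonal matrices `𝒟`. -/
def scalarDiag (R : Type*) [Ring R] [Algebra ℂ R] : ℂ × ℂ →* M₂ R where
  toFun c := !![algebraMap ℂ R c.1, 0; 0, algebraMap ℂ R c.2]
  map_one' := by simp [Matrix.one_fin_two]
  map_mul' c d := by simp [Matrix.mul_fin_two, -Matrix.cons_mul]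

theorem scalarDiag_apply (c : ℂ × ℂ) :
    scalarDiag R c = !![algebraMap ℂ R c.1, 0; 0, algebraMap ℂ R c.2] := rfl

theorem IsDiagScalar.mem_range_scalarDiag {D : M₂ R} (hD : IsDiagScalar D) :
    D ∈ Set.range (scalarDiag R) := by
  obtain ⟨⟨p, hp⟩, ⟨q, hq⟩, h01, h10⟩ := hD
  exact ⟨(p, q), by rw [Matrix.eta_fin_two D, hp, hq, h01, h10, scalarDiag_apply]⟩

theorem antidiag_semiconjBy_scalarDiag (a b : R) (c : ℂ × ℂ) :
    SemiconjBy !![0, a; b, 0] (scalarDiag R c) (scalarDiag R (swapHom c)) := by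
  simp [SemiconjBy, scalarDiag_apply, swapHom_apply, Matrix.mul_fin_two, -Matrix.cons_mul,
    Algebra.commutes]

variable {φ : R →ₗ[ℂ] ℂ} {M N : M₂ R}

theorem phi2_smul_s6 (z : ℂ) : phi2 φ (z • M) = z * phi2 φ M := by
  simp only [phi2, Matrix.smul_apply, map_smul, smul_eq_mul]
  ring

theorem scalarDiag_mul_apply_zero_zero (c : ℂ × ℂ) :
    (scalarDiag R c * M) 0 0 = c.1 • M 0 0 := by
  simp [scalarDiag_apply, Matrix.mul_apply, Algebra.smul_def]

theorem scalarDiag_mul_apply_one_one (c : ℂ × ℂ) :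
    (scalarDiag R c * M) 1 1 = c.2 • M 1 1 := by
  simp [scalarDiag_apply, Matrix.mul_apply, Algebra.smul_def]

theorem phi2_scalarDiag_mul (hM : φ (M 0 0) = φ (M 1 1)) (c : ℂ × ℂ) :
    phi2 φ (scalarDiag R c * M) = entryMean c * phi2 φ M := by
  simp only [phi2, entryMean, scalarDiag_mul_apply_zero_zero, scalarDiag_mul_apply_one_one,
    map_smul, smul_eq_mul, hM]
  ring

theorem etaM_ED_scalarDiag_mul (hM : φ (M 0 0) = φ (M 1 1)) (c : ℂ × ℂ) :
    etaM (ED φ (scalarDiag R c * M)) = phi2 φ M • scalarDiag R (swapHom c) := by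
  have phi2_eq : phi2 φ M = φ (M 1 1) := by rw [phi2, hM, add_self_div_two]
  rw [ED, scalarDiag_mul_apply_zero_zero, scalarDiag_mul_apply_one_one, φ.map_smul, φ.map_smul, hM,
    phi2_eq, scalarDiag_apply]
  simp [etaM, swapHom_apply, Algebra.algebraMap_eq_smul_one, smul_smul, mul_comm]

theorem phi2_etaM_ED_mul (hM : φ (M 0 0) = φ (M 1 1)) (hN : φ (N 0 0) = φ (N 1 1))
    (c d : ℂ × ℂ) :
    phi2 φ (etaM (ED φ (scalarDiag R c * M)) * (scalarDiag R d * N)) =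
      entryMean (c * swapHom d) * (phi2 φ M * phi2 φ N) := by
  have mean_eq : entryMean (swapHom c * d) = entryMean (c * swapHom d) := by
    rw [← entryMean_swapHom, map_mul, swapHom_involutive]
  rw [etaM_ED_scalarDiag_mul hM, smul_mul_assoc, phi2_smul_s6, ← mul_assoc (scalarDiag R _),
    ← map_mul, phi2_scalarDiag_mul hN, mean_eq, mul_left_comm]

end ScalarDiagonal

theorem apply_mul_pow_comm_of_tracial {R α : Type*} [Monoid R] {f : R → α}
    (hf : ∀ x y, f (x * y) = f (y * x)) (x y : R) (k : ℕ) :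
    f ((x * y) ^ k) = f ((y * x) ^ k) := by
  cases k with
  | zero => simp only [pow_zero]
  | succ k => rw [pow_succ, ← mul_assoc, mul_pow_mul, hf, ← mul_assoc, ← pow_succ']

section Moments

variable {φ : A →ₗ[ℂ] ℂ} {a ξ : A}

theorem phi2_Amat_pow_of_odd {m : ℕ} (hm : Odd m) : phi2 φ (Amat a ^ m) = 0 := by
  obtain ⟨k, rfl⟩ := hm
  simp [Amat, antidiag_pow_two_mul_add_one, phi2]

theorem phi_Amat_pow_diag (hbal : ∀ k : ℕ, φ ((a * star a) ^ k) = φ ((star a * a) ^ k))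
    (m : ℕ) : φ ((Amat a ^ m) 0 0) = φ ((Amat a ^ m) 1 1) := by
  rcases Nat.even_or_odd' m with ⟨k, rfl | rfl⟩
  · simpa [Amat, antidiag_pow_two_mul] using hbal k
  · simp [Amat, antidiag_pow_two_mul_add_one]

theorem phi_Xmat_mul_Amat_pow_diag
    (hsym : ∀ k : ℕ,
      φ (ξ * (a * (star a * a) ^ k)) = φ (star ξ * (star a * (a * star a) ^ k)))
    (n : ℕ) : φ ((Xmat ξ * Amat a ^ n) 0 0) = φ ((Xmat ξ * Amat a ^ n) 1 1) := by
  rcases Nat.even_or_odd' n with ⟨k, rfl | rfl⟩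
  · simp [Xmat, Amat, antidiag_pow_two_mul]
  · simpa [Xmat, Amat, antidiag_pow_two_mul_add_one] using (hsym k).symm

theorem phi2_Xmat_mul_scalarDiag_mul_Amat_pow
    (hsym : ∀ k : ℕ,
      φ (ξ * (a * (star a * a) ^ k)) = φ (star ξ * (star a * (a * star a) ^ k)))
    (c : ℂ × ℂ) (n : ℕ) :
    phi2 φ (Xmat ξ * (scalarDiag A c * Amat a ^ n)) =
      entryMean c * phi2 φ (Xmat ξ * Amat a ^ n) := by
  have hX : Xmat ξ * scalarDiag A c = scalarDiag A (swapHom c) * Xmat ξ :=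
    antidiag_semiconjBy_scalarDiag (star ξ) ξ c
  rw [← mul_assoc, hX, mul_assoc, phi2_scalarDiag_mul (phi_Xmat_mul_Amat_pow_diag hsym n),
    entryMean_swapHom]

theorem phi2_etaM_ED_mul_Amat_pow
    (hbal : ∀ k : ℕ, φ ((a * star a) ^ k) = φ ((star a * a) ^ k)) (c d : ℂ × ℂ) (m k : ℕ) :
    phi2 φ (etaM (ED φ (scalarDiag A c * Amat a ^ m)) * (scalarDiag A d * Amat a ^ k)) =
      entryMean (c * swapHom^[m + 1] d) * (phi2 φ (Amat a ^ m) * phi2 φ (Amat a ^ k)) := by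
  rw [phi2_etaM_ED_mul (phi_Amat_pow_diag hbal m) (phi_Amat_pow_diag hbal k)]
  rcases Nat.even_or_odd m with hm | hm
  · rw [swapHom_involutive.iterate_odd hm.add_one]
  · simp only [phi2_Amat_pow_of_odd hm, zero_mul, mul_zero]

theorem chain_Amat_map_scalarDiag (a : A) {L : List (ℂ × ℂ)} (hL : L ≠ []) :
    chain (Amat a) (L.map (scalarDiag A)) =
      scalarDiag A (twistedProd swapHom L) * Amat a ^ (L.length - 1) :=
  chain_map_of_semiconjBy (antidiag_semiconjBy_scalarDiag a (star a)) hL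

theorem phi2_etaM_ED_chain_take_mul_chain_drop
    (hbal : ∀ k : ℕ, φ ((a * star a) ^ k) = φ ((star a * a) ^ k)) {L : List (ℂ × ℂ)} {m : ℕ}
    (hm : m < L.length - 1) :
    phi2 φ (etaM (ED φ (chain (Amat a) ((L.map (scalarDiag A)).take (m + 1)))) *
        chain (Amat a) ((L.map (scalarDiag A)).drop (m + 1))) =
      entryMean (twistedProd swapHom L) *
        (phi2 φ (Amat a ^ m) * phi2 φ (Amat a ^ (L.length - 1 - 1 - m))) := by
  have length_take : (L.take (m + 1)).length = m + 1 := by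
    rw [List.length_take]
    omega
  have length_drop : (L.drop (m + 1)).length - 1 = L.length - 1 - 1 - m := by
    rw [List.length_drop]
    omega
  have take_ne_nil : L.take (m + 1) ≠ [] := List.ne_nil_of_length_pos (by omega)
  have drop_ne_nil : L.drop (m + 1) ≠ [] :=
    List.ne_nil_of_length_pos (by rw [List.length_drop]; omega)
  have coeff_eq : twistedProd swapHom L = twistedProd swapHom (L.take (m + 1)) *
      swapHom^[m + 1] (twistedProd swapHom (L.drop (m + 1))) := by
    simpa only [List.take_append_drop, length_take] using
      twistedProd_append swapHom (L.take (m + 1)) (L.drop (m + 1))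
  rw [← List.map_take, ← List.map_drop, chain_Amat_map_scalarDiag a take_ne_nil,
    chain_Amat_map_scalarDiag a drop_ne_nil, length_take, length_drop, Nat.add_sub_cancel,
    phi2_etaM_ED_mul_Amat_pow hbal, coeff_eq]

end Moments

theorem conjugate_relations_D_of_scalars_general
    (φ : A →ₗ[ℂ] ℂ) (a ξ : A)
    (hbal : ∀ m : ℕ, φ ((a * star a) ^ m) = φ ((star a * a) ^ m))
    (hscal : ∀ n : ℕ,
      phi2 φ (Xmat ξ * Amat a ^ n) =
        ∑ m ∈ Finset.range n, phi2 φ (Amat a ^ m) * phi2 φ (Amat a ^ (n - 1 - m)))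
    (hsym : ∀ m : ℕ,
      φ (ξ * (a * (star a * a) ^ m)) = φ (star ξ * (star a * (a * star a) ^ m))) :
    MatConjEta φ a (Xmat ξ) IsDiagScalar (ED φ) := by
  intro l hl hD
  obtain ⟨L, rfl⟩ : l ∈ Set.range (List.map (scalarDiag A)) := by
    rw [Set.range_list_map]
    exact fun D hDl => (hD D hDl).mem_range_scalarDiag
  have hL : L ≠ [] := fun h => hl (List.map_eq_nil_iff.mpr h)
  rw [chain_Amat_map_scalarDiag a hL, phi2_Xmat_mul_scalarDiag_mul_Amat_pow hsym, hscal,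
    Finset.mul_sum, List.length_map]
  exact Finset.sum_congr rfl fun m hm =>
    (phi2_etaM_ED_chain_take_mul_chain_drop hbal (Finset.mem_range.mp hm)).symm

/-- Algebraic core of the converse direction of Proposition 3.7: if `X = [[0,ξ*],[ξ,0]]`
fulfills the conjugate relations for `A` with respect to the scalars, and the moment
symmetry `φ(ξ a (a*a)^m) = φ(ξ* a* (aa*)^m)` holds, then `X` fulfills the conjugate
relations for `A` with respect to `𝒟` and `η₀`. -/
theorem conjugate_relations_D_of_scalars
    (φ : A →ₗ[ℂ] ℂ)
    (hφ1 : φ 1 = 1)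
    (hφpos : ∀ x : A, 0 ≤ φ (star x * x))
    (hφtr : ∀ x y : A, φ (x * y) = φ (y * x))
    (a ξ : A)
    (hscal : ∀ n : ℕ,
      phi2 φ (Xmat ξ * Amat a ^ n) =
        ∑ m ∈ Finset.range n, phi2 φ (Amat a ^ m) * phi2 φ (Amat a ^ (n - 1 - m)))
    (hsym : ∀ m : ℕ,
      φ (ξ * (a * (star a * a) ^ m)) = φ (star ξ * (star a * (a * star a) ^ m))) :
    MatConjEta φ a (Xmat ξ) IsDiagScalar (ED φ) :=
  conjugate_relations_D_of_scalars_general φ a ξ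
    (apply_mul_pow_comm_of_tracial hφtr a (star a)) hscal hsym
end
end

section
/- Let ℬ ⊆ 𝒜 be a unital *-subalgebra, d ≥ 1, and let a_ij, ξ_ij ∈ 𝒜 (1 ≤ i, j ≤ d) be such that the family {ξ_ij, ξ_ij*} fulfills the conjugate relations for {a_ij, a_ij*} with respect to ℬ: writing x^{(1)} := x and x^{(2)} := x*, for all n ≥ 0, all b₀, …, bₙ ∈ ℬ and all index triples (k, l, ε), (k₁, l₁, ε₁), …, (kₙ, lₙ, εₙ) with 1 ≤ kₘ, lₘ ≤ d and εₘ ∈ {1, 2}: φ( ξ_{kl}^{(ε)} b₀ a_{k₁l₁}^{(ε₁)} b₁ ⋯ a_{kₙlₙ}^{(εₙ)} bₙ ) = Σ_{m=1}^{n} [ (k, l, ε) = (kₘ, lₘ, εₘ) ] · φ(b₀ a_{k₁l₁}^{(ε₁)} ⋯ a_{k_{m−1}l_{m−1}}^{(ε_{m−1})} b_{m−1}) · φ(bₘ a_{k_{m+1}l_{m+1}}^{(ε_{m+1})} ⋯ a_{kₙlₙ}^{(εₙ)} bₙ). Set A := (a_ij) ∈ M_d(𝒜) and X := (1/d)·(ξ_ji)_{i,j}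 ∈ M_d(𝒜) (i.e. X_{ij} = ξ_{ji}/d). Then {X, X*} fulfills the conjugate relations for {A, A*} with respect to M_d(ℬ): writing A₁ := A, A₂ := A*, for all n ≥ 0, all B₀, …, Bₙ ∈ M_d(ℬ) and all i₁, …, iₙ ∈ {1,2}: φ_d(X B₀ A_{i₁} B₁ ⋯ A_{iₙ} Bₙ) = Σ_{m=1}^{n} δ_{iₘ,1} φ_d(B₀ A_{i₁} ⋯ A_{i_{m−1}} B_{m−1}) φ_d(Bₘ A_{i_{m+1}} ⋯ A_{iₙ} Bₙ), and the analogous relations hold with X* in place of X and δ_{iₘ,2} in place of δ_{iₘ,1}. Moreover φ_d(X*X) + φ_d(X X*) = d^{−3} Σ_{i,j=1}^{d} ( φ(ξ_ij* ξ_ij) + φ(ξ_ij ξ_ij*) ). (Forward direction of Proposition 4.1, 1°, yielding Φ*({a_ij, a_ij*} : ℬ) = d³ Φ*({A, A*} : M_d(ℬ)).) -/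
open scoped BigOperators
open ComplexOrder

noncomputable section

variable {A : Type*} [Ring A] [Algebra ℂ A] [StarRing A] [StarModule ℂ A]

/-- The word `b₀ x₁ b₁ x₂ b₂ ⋯ xₙ bₙ`. -/
def interWord {T : Type*} [Ring T] {n : ℕ} (bs : Fin (n + 1) → T) (xs : Fin n → T) : T :=
  bs 0 * (List.ofFn fun m : Fin n => xs m * bs m.succ).prod

/-- For `m : Fin n` (standing for the paper's index `m+1 ∈ {1, …, n}`), the prefix word
`b₀ x₁ b₁ ⋯ xₘ bₘ`. -/
def preWord {T : Type*} [Ring T] {n : ℕ} (bs : Fin (n + 1) → T) (xs : Fin n → T)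
    (m : Fin n) : T :=
  bs 0 * ((List.ofFn fun j : Fin n => xs j * bs j.succ).take (m : ℕ)).prod

/-- For `m : Fin n` (standing for the paper's index `m+1 ∈ {1, …, n}`), the suffix word
`b_{m+1} x_{m+2} b_{m+2} ⋯ xₙ bₙ`. -/
def sufWord {T : Type*} [Ring T] {n : ℕ} (bs : Fin (n + 1) → T) (xs : Fin n → T)
    (m : Fin n) : T :=
  bs m.succ * ((List.ofFn fun j : Fin n => xs j * bs j.succ).drop ((m : ℕ) + 1)).prod

/-- The normalized trace `φ_d = tr ⊗ φ` on `M_d(𝒜)`. -/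
def phid {d : ℕ} (φ : A →ₗ[ℂ] ℂ) (X : Matrix (Fin d) (Fin d) A) : ℂ :=
  (∑ i, φ (X i i)) / d

/-- The entry `a_{kl}^{(ε)}` selected by an index triple `(k, l, ε)`:
`ε = 0` gives `a_{kl}`, `ε = 1` gives `(a_{kl})*`. -/
def ent {d : ℕ} (a : Fin d → Fin d → A) (t : Fin d × Fin d × Fin 2) : A :=
  if t.2.2 = 0 then a t.1 t.2.1 else star (a t.1 t.2.1)

/-- The family `{ξ_ij, ξ_ij*}` fulfills the conjugate relations for `{a_ij, a_ij*}`
with respect to a unital *-subalgebra `B`. -/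
def FamConjRel {d : ℕ} (φ : A →ₗ[ℂ] ℂ) (B : StarSubalgebra ℂ A)
    (a ξ : Fin d → Fin d → A) : Prop :=
  ∀ (n : ℕ) (bs : Fin (n + 1) → A) (idx : Fin n → Fin d × Fin d × Fin 2)
    (t : Fin d × Fin d × Fin 2),
    (∀ m, bs m ∈ B) →
    φ (ent ξ t * interWord bs fun m => ent a (idx m)) =
      ∑ m : Fin n,
        (if idx m = t then
          φ (preWord bs (fun j => ent a (idx j)) m) *
            φ (sufWord bs (fun j => ent a (idx j)) m)
        else 0)

/-- `Xm` fulfills the conjugate relations for the matrix `Am` (paired with its adjoint,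
matching on the index `e`) with respect to the matrices satisfying `P`. -/
def MatFamConjRel {d : ℕ} (φd : Matrix (Fin d) (Fin d) A → ℂ)
    (P : Matrix (Fin d) (Fin d) A → Prop)
    (Am Xm : Matrix (Fin d) (Fin d) A) (e : Fin 2) : Prop :=
  ∀ (n : ℕ) (Bs : Fin (n + 1) → Matrix (Fin d) (Fin d) A) (i : Fin n → Fin 2),
    (∀ m, P (Bs m)) →
    φd (Xm * interWord Bs fun m => sel Am (i m)) =
      ∑ m : Fin n,
        (if i m = e then
          φd (preWord Bs (fun j => sel Am (i j)) m) *
            φd (sufWord Bs (fun j => sel Am (i j)) m)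
        else 0)

/-!
In free variables, the conjugate relations say that `φ (ξ_t w) = (φ ⊗ φ) (∂_t w)`, where `∂_t` is
the free difference quotient: it kills `ℬ`, sends the letter `a_s` to `δ_st 1 ⊗ 1` and obeys the
Leibniz rule. In `𝒜` the value `∂_t w` depends on how `w` is written, so we work with the linear
relation spanned by all pairs (word, difference quotient of that word) in place of a map.
An entry of `B₀ A_{i₁} B₁ ⋯ A_{iₙ} Bₙ` is a sum of words in the entries; its difference quotient
with respect to the `(k, l)` entry of `A_e` is `∑ [i_m = e] (prefix_m)_{pk} ⊗ (suffix_m)_{lq}`.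
Summing over `k = p` and `l = q` turns these matrix entries into the two traces.
-/

open scoped TensorProduct Matrix

section Words

variable {T : Type*} [Ring T] {n : ℕ}

theorem interWord_zero (bs : Fin 1 → T) (xs : Fin 0 → T) : interWord bs xs = bs 0 := by
  simp [interWord]

variable (bs : Fin (n + 2) → T) (xs : Fin (n + 1) → T)

theorem interWord_succ :
    interWord bs xs = interWord (fun m => bs m.castSucc) (fun m => xs m.castSucc) *
      (xs (Fin.last n) * bs (Fin.last (n + 1))) := by
  rw [interWord, List.ofFn_succ_last]
  simp [interWord, mul_assoc]

theorem preWord_castSucc (m : Fin n) :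
    preWord bs xs m.castSucc = preWord (fun j => bs j.castSucc) (fun j => xs j.castSucc) m := by
  rw [preWord, List.ofFn_succ_last, List.take_append_of_le_length (by simp [m.is_lt.le])]
  simp [preWord]

theorem preWord_last :
    preWord bs xs (Fin.last n) =
      interWord (fun m => bs m.castSucc) (fun m => xs m.castSucc) := by
  rw [preWord, List.ofFn_succ_last, List.take_left' (by simp)]
  simp [interWord]

theorem sufWord_castSucc (m : Fin n) :
    sufWord bs xs m.castSucc = sufWord (fun j => bs j.castSucc) (fun j => xs j.castSucc) m *
      (xs (Fin.last n) * bs (Fin.last (n + 1))) := by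
  rw [sufWord, List.ofFn_succ_last, List.drop_append_of_le_length (by simp [m.is_lt])]
  simp [sufWord, mul_assoc]

theorem sufWord_last : sufWord bs xs (Fin.last n) = bs (Fin.last (n + 1)) := by
  rw [sufWord, List.drop_eq_nil_of_le (by simp)]
  simp

end Words

section DiffQuotGraph

variable {R T Λ : Type*} [CommRing R] [Ring T] [Algebra R T] [DecidableEq Λ]

variable (R) in
/-- The graph of the free difference quotient `∂_t : T → T ⊗ T` with respect to the letter `x t`,
where coefficients from `S` have derivative `0`: the span of all pairs of a word in the letters `x`
and the sum of `prefix ⊗ suffix` over its occurrences of `x t`. It need not be single-valued, since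
an element of `T` may be represented by several words. -/
def diffQuotGraph (S : Set T) (x : Λ → T) (t : Λ) : Submodule R (T × T ⊗[R] T) :=
  Submodule.span R {g | ∃ (n : ℕ) (bs : Fin (n + 1) → T) (s : Fin n → Λ), (∀ m, bs m ∈ S) ∧
    g = (interWord bs fun m => x (s m), ∑ m, if s m = t then
      preWord bs (fun j => x (s j)) m ⊗ₜ sufWord bs (fun j => x (s j)) m else 0)}

variable {S : Set T} {x : Λ → T} {t : Λ}

theorem mk_zero_mem_diffQuotGraph {b : T} (hb : b ∈ S) : (b, 0) ∈ diffQuotGraph R S x t :=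
  Submodule.subset_span ⟨0, fun _ => b, Fin.elim0, fun _ => hb, by simp [interWord_zero]⟩

theorem mul_letter_mem_diffQuotGraph {g : T × T ⊗[R] T} (hg : g ∈ diffQuotGraph R S x t)
    (s : Λ) {b : T} (hb : b ∈ S) :
    (g.1 * (x s * b), (LinearMap.mulRight R (x s * b)).lTensor T g.2 +
      if s = t then g.1 ⊗ₜ b else 0) ∈ diffQuotGraph R S x t := by
  induction hg using Submodule.span_induction with
  | mem g hg =>
    obtain ⟨n, bs, r, hbs, rfl⟩ := hg
    refine Submodule.subset_span ⟨n + 1, Fin.snoc bs b, Fin.snoc r s, ?_, ?_⟩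
    · exact Fin.lastCases (by simpa using hb) (by simpa using hbs)
    · simp [-LinearMap.mulRight_mul, interWord_succ, Fin.sum_univ_castSucc, preWord_castSucc,
        preWord_last, sufWord_castSucc, sufWord_last,
        apply_ite ((LinearMap.mulRight R (x s * b)).lTensor T)]
  | zero => simp [← Prod.zero_eq_mk]
  | add g g' _ _ hg hg' =>
    convert add_mem hg hg' using 1
    ext
    · simp [add_mul]
    · split_ifs <;> simp [TensorProduct.add_tmul, add_add_add_comm]
  | smul c g _ hg =>
    convert Submodule.smul_mem _ c hg using 1
    ext <;> simp [TensorProduct.smul_tmul']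

theorem interWord_apply_mem_diffQuotGraph {κ ι : Type*} [DecidableEq κ] [Fintype ι]
    [DecidableEq ι] {τ : κ × ι × ι → Λ} (hτ : τ.Injective) (e : κ) (k₀ l₀ p q : ι) {n : ℕ}
    {Bs : Fin (n + 1) → Matrix ι ι T} (hBs : ∀ m i j, Bs m i j ∈ S) {X : κ → Matrix ι ι T}
    (hX : ∀ i k l, X i k l = x (τ (i, k, l))) (i : Fin n → κ) :
    ((interWord Bs fun m => X (i m)) p q, ∑ m, if i m = e then
      preWord Bs (fun j => X (i j)) m p k₀ ⊗ₜ sufWord Bs (fun j => X (i j)) m l₀ q else 0) ∈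
      diffQuotGraph R S x (τ (e, k₀, l₀)) := by
  induction n generalizing q with
  | zero => simpa [interWord_zero] using mk_zero_mem_diffQuotGraph (hBs 0 p q)
  | succ n ih =>
    have sum_over_last_letter := Submodule.sum_mem (t := Finset.univ) _ fun k _ =>
      Submodule.sum_mem (t := Finset.univ) _ fun l _ =>
        mul_letter_mem_diffQuotGraph (ih k (fun m => hBs m.castSucc) fun m => i m.castSucc)
          (τ (i (Fin.last n), k, l)) (hBs (Fin.last (n + 1)) l q)
    convert sum_over_last_letter using 1
    ext
    · simp [interWord_succ, Matrix.mul_apply, hX, Finset.mul_sum, Prod.fst_sum]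
    · simp only [Prod.snd_sum, Finset.sum_add_distrib, Fin.sum_univ_castSucc, preWord_castSucc,
        preWord_last, sufWord_castSucc, sufWord_last, map_sum]
      refine congrArg₂ (· + ·) ?earlier_letters ?last_letter
      case earlier_letters =>
        simp_rw [Finset.sum_comm (t := (Finset.univ : Finset (Fin n)))]
        refine Finset.sum_congr rfl fun m _ => ?_
        split_ifs
        · simp [-LinearMap.mulRight_mul, Matrix.mul_apply, hX, TensorProduct.tmul_sum,
            Finset.mul_sum]
        · simp
      case last_letter =>
        simp [hτ.eq_iff, ite_and]

end DiffQuotGraph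

section MatrixTrace

variable {T : Type*} [Ring T] [Algebra ℂ T] {d : ℕ} (φ : T →ₗ[ℂ] ℂ)

theorem phid_mul (X Y : Matrix (Fin d) (Fin d) T) :
    phid φ (X * Y) = (∑ i, ∑ j, φ (X i j * Y j i)) / d := by
  simp [phid, Matrix.mul_apply]

theorem phid_smul (c : ℂ) (X : Matrix (Fin d) (Fin d) T) : phid φ (c • X) = c * phid φ X := by
  simp [phid, ← Finset.mul_sum, mul_div_assoc]

theorem phid_star_mul_self_add_phid_mul_star_self [StarRing T] (X : Matrix (Fin d) (Fin d) T) :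
    phid φ (star X * X) + phid φ (X * star X) =
      (∑ i, ∑ j, (φ (star (X i j) * X i j) + φ (X i j * star (X i j)))) / d := by
  rw [phid_mul, phid_mul, Finset.sum_comm, ← add_div]
  simp only [Matrix.star_apply, Finset.sum_add_distrib]

theorem phid_star_mul_self_add_phid_mul_star_self_smul_transpose [StarRing T] [StarModule ℂ T]
    (c : ℂ) (X : Matrix (Fin d) (Fin d) T) :
    phid φ (star (c • Xᵀ) * (c • Xᵀ)) +
        phid φ ((c • Xᵀ) * star (c • Xᵀ)) =
      star c * c / d *
        ∑ i, ∑ j, (φ (star (X i j) * X i j) + φ (X i j * star (X i j))) := by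
  rw [star_smul, smul_mul_smul_comm, smul_mul_smul_comm, mul_comm c, phid_smul, phid_smul,
    ← mul_add, phid_star_mul_self_add_phid_mul_star_self, Finset.sum_comm, div_mul_eq_mul_div,
    mul_div_assoc]
  simp only [Matrix.transpose_apply]

end MatrixTrace

section EntryIndex

/-- The index triple at which `ent a` returns the `(k, l)` entry of `sel A i`, where `A = (a_kl)`.
The adjoint (`i = 1`) transposes the matrix indices. -/
def entryIndex {d : ℕ} (s : Fin 2 × Fin d × Fin d) : Fin d × Fin d × Fin 2 :=
  if s.1 = 0 then (s.2.1, s.2.2, 0) else (s.2.2, s.2.1, 1)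

theorem entryIndex_injective {d : ℕ} : (entryIndex (d := d)).Injective := by
  rintro ⟨i, k, l⟩ ⟨i', k', l'⟩
  fin_cases i <;> fin_cases i' <;> simp +contextual [entryIndex]

theorem sel_of_apply {T : Type*} [Ring T] [StarRing T] {d : ℕ} (a : Fin d → Fin d → T)
    (i : Fin 2) (k l : Fin d) : sel (Matrix.of a) i k l = ent a (entryIndex (i, k, l)) := by
  fin_cases i <;> simp [sel, entryIndex, ent, Matrix.star_apply]

end EntryIndex

namespace FamConjRel

variable {d : ℕ} {φ : A →ₗ[ℂ] ℂ} {B : StarSubalgebra ℂ A} {a ξ : Fin d → Fin d → A}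

theorem apply_mul_fst_of_mem_diffQuotGraph (h : FamConjRel φ B a ξ) {t : Fin d × Fin d × Fin 2}
    {g : A × A ⊗[ℂ] A} (hg : g ∈ diffQuotGraph ℂ (B : Set A) (ent a) t) :
    φ (ent ξ t * g.1) = LinearMap.mul' ℂ ℂ (TensorProduct.map φ φ g.2) := by
  induction hg using Submodule.span_induction with
  | mem g hg =>
    obtain ⟨n, bs, s, hbs, rfl⟩ := hg
    simp only [h n bs s t hbs, map_sum]
    refine Finset.sum_congr rfl fun m _ => ?_
    split_ifs <;> simp
  | zero => simp
  | add g g' _ _ hg hg' => simp [mul_add, hg, hg']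
  | smul c g _ hg => simp [hg]

variable {n : ℕ} {Bs : Fin (n + 1) → Matrix (Fin d) (Fin d) A}

theorem apply_sel_mul_interWord_apply (h : FamConjRel φ B a ξ) (hBs : ∀ m i j, Bs m i j ∈ B)
    (i : Fin n → Fin 2) (e : Fin 2) (k l p q : Fin d) :
    φ (sel (Matrix.of ξ) e k l * (interWord Bs fun m => sel (Matrix.of a) (i m)) p q) =
      ∑ m, if i m = e then
        φ (preWord Bs (fun j => sel (Matrix.of a) (i j)) m p k) *
          φ (sufWord Bs (fun j => sel (Matrix.of a) (i j)) m l q) else 0 := by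
  rw [sel_of_apply, h.apply_mul_fst_of_mem_diffQuotGraph
    (interWord_apply_mem_diffQuotGraph entryIndex_injective e k l p q hBs (sel_of_apply a) i)]
  simp only [map_sum]
  refine Finset.sum_congr rfl fun m _ => ?_
  split_ifs <;> simp

theorem matFamConjRel (h : FamConjRel φ B a ξ) (e : Fin 2) :
    MatFamConjRel (phid φ) (fun Y => ∀ i j, Y i j ∈ B) (Matrix.of a)
      ((d : ℂ)⁻¹ • (sel (Matrix.of ξ) e)ᵀ) e := by
  intro n Bs i hBs
  rw [smul_mul_assoc, phid_smul, phid_mul]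
  simp only [Matrix.transpose_apply, h.apply_sel_mul_interWord_apply hBs]
  simp_rw [Finset.sum_comm (t := (Finset.univ : Finset (Fin n)))]
  rw [Finset.sum_div, Finset.mul_sum]
  refine Finset.sum_congr rfl fun m _ => ?_
  split_ifs
  · simp only [phid, ← Finset.mul_sum, ← Finset.sum_mul]
    ring
  · simp

end FamConjRel

theorem matrix_conjugate_system_of_entry_conjugate_system_general
    {d : ℕ} (_hd : 0 < d)
    (φ : A →ₗ[ℂ] ℂ)
    (B : StarSubalgebra ℂ A)
    (a ξ : Fin d → Fin d → A)
    (hconj : FamConjRel φ B a ξ) :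
    let Am : Matrix (Fin d) (Fin d) A := Matrix.of a
    let Xm : Matrix (Fin d) (Fin d) A := Matrix.of fun i j => (d : ℂ)⁻¹ • ξ j i
    MatFamConjRel (phid φ) (fun Y => ∀ i j, Y i j ∈ B) Am Xm 0 ∧
    MatFamConjRel (phid φ) (fun Y => ∀ i j, Y i j ∈ B) Am (star Xm) 1 ∧
    phid φ (star Xm * Xm) + phid φ (Xm * star Xm) =
      ((d : ℂ) ^ 3)⁻¹ *
        ∑ i : Fin d, ∑ j : Fin d,
          (φ (star (ξ i j) * ξ i j) + φ (ξ i j * star (ξ i j))) := by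
  intro Am Xm
  have star_Xm : star Xm = (d : ℂ)⁻¹ • (star (Matrix.of ξ))ᵀ := by
    ext i j
    simp [Xm, Matrix.star_apply]
  refine ⟨hconj.matFamConjRel 0, ?_, ?_⟩
  · rw [star_Xm]
    exact hconj.matFamConjRel 1
  · refine (phid_star_mul_self_add_phid_mul_star_self_smul_transpose φ (d : ℂ)⁻¹
      (Matrix.of ξ)).trans ?_
    congr 1
    simp only [star_inv₀, star_natCast]
    ring

/-- Forward direction of Proposition 4.1, 1°: if `{ξ_ij, ξ_ij*}` fulfills the conjugate
relations for `{a_ij, a_ij*}` with respect to `ℬ`, then `X = (1/d)(ξ_ji)_{ij}` is such that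
`{X, X*}` fulfills the conjugate relations for `{A, A*}` with respect to `M_d(ℬ)`, and
`φ_d(X*X) + φ_d(XX*) = d⁻³ Σ_{ij} (φ(ξ_ij*ξ_ij) + φ(ξ_ij ξ_ij*))`. -/
theorem matrix_conjugate_system_of_entry_conjugate_system
    {d : ℕ} (hd : 0 < d)
    (φ : A →ₗ[ℂ] ℂ)
    (hφ1 : φ 1 = 1)
    (hφpos : ∀ x : A, 0 ≤ φ (star x * x))
    (hφtr : ∀ x y : A, φ (x * y) = φ (y * x))
    (B : StarSubalgebra ℂ A)
    (a ξ : Fin d → Fin d → A)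
    (hconj : FamConjRel φ B a ξ) :
    let Am : Matrix (Fin d) (Fin d) A := Matrix.of a
    let Xm : Matrix (Fin d) (Fin d) A := Matrix.of fun i j => (d : ℂ)⁻¹ • ξ j i
    MatFamConjRel (phid φ) (fun Y => ∀ i j, Y i j ∈ B) Am Xm 0 ∧
    MatFamConjRel (phid φ) (fun Y => ∀ i j, Y i j ∈ B) Am (star Xm) 1 ∧
    phid φ (star Xm * Xm) + phid φ (Xm * star Xm) =
      ((d : ℂ) ^ 3)⁻¹ *
        ∑ i : Fin d, ∑ j : Fin d,
          (φ (star (ξ i j) * ξ i j) + φ (ξ i j * star (ξ i j))) := by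
  exact matrix_conjugate_system_of_entry_conjugate_system_general hd φ B a ξ hconj
end
end

section
/- Let ℬ ⊆ 𝒜 be a unital *-subalgebra, d ≥ 1, a_ij ∈ 𝒜 (1 ≤ i, j ≤ d), A := (a_ij) ∈ M_d(𝒜), and let X ∈ M_d(𝒜) be such that {X, X*} fulfills the conjugate relations for {A, A*} with respect to M_d(ℬ): writing A₁ := A, A₂ := A*, for all n ≥ 0, B₀, …, Bₙ ∈ M_d(ℬ) and i₁, …, iₙ ∈ {1,2}: φ_d(X B₀ A_{i₁} B₁ ⋯ A_{iₙ} Bₙ) = Σ_{m=1}^{n} δ_{iₘ,1} φ_d(B₀ A_{i₁} ⋯ A_{i_{m−1}} B_{m−1}) φ_d(Bₘ A_{i_{m+1}} ⋯ A_{iₙ} Bₙ), and the analogous relations hold with X* and δ_{iₘ,2}. Define ξ_ij := d·X_{ji} (1 ≤ i, j ≤ d). Then the family {ξ_ij, ξ_ij*} fulfills the conjugate relations for {a_ij, a_ij*} with respect to ℬ: writing x^{(1)} := x and x^{(2)} := x*, for all n ≥ 0, b₀, …, bₙ ∈ ℬ and index triples (k, l, ε), (k₁, l₁, ε₁), …,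 (kₙ, lₙ, εₙ): φ( ξ_{kl}^{(ε)} b₀ a_{k₁l₁}^{(ε₁)} b₁ ⋯ a_{kₙlₙ}^{(εₙ)} bₙ ) = Σ_{m=1}^{n} [ (k, l, ε) = (kₘ, lₘ, εₘ) ] φ(b₀ ⋯ b_{m−1}) φ(bₘ ⋯ bₙ), with the evident partial products. (Converse direction of Proposition 4.1, 1°.) -/
open scoped BigOperators
open ComplexOrder

noncomputable section

variable {A : Type*} [Ring A] [Algebra ℂ A] [StarRing A] [StarModule ℂ A]

/-! Test the matrix relations on matrix units. If `Bₘ = single (r m) (c m) bₘ`, then every word in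
the `Bₘ` and `A, A*` is again a multiple of a matrix unit, with coefficient the corresponding word
in the `bₘ` and the entries of `A, A*` in the positions `(c (m - 1), r m)`. Choose the positions so
that these entries are the prescribed letters, and so that the outer row and column are those of
the letter dual to `ξ`. Then the trace of a prefix (suffix) word vanishes unless the removed letter
has this row (column), and together with `δ_{iₘ,ε}` this is the Kronecker delta of the scalar
relations. The factor `d` in `ξ_ij = d·X_ji` makes up for two normalized traces on the right against
one on the left. -/

section Word

variable {T : Type*} [Ring T] {n : ℕ}

theorem interWord_succ_s10 (bs : Fin (n + 2) → T) (xs : Fin (n + 1) → T) :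
    interWord bs xs = bs 0 * xs 0 * interWord (Fin.tail bs) (Fin.tail xs) := by
  simp [interWord, Fin.tail, List.ofFn_succ, mul_assoc]

theorem preWord_zero (bs : Fin (n + 2) → T) (xs : Fin (n + 1) → T) : preWord bs xs 0 = bs 0 := by
  simp [preWord]

theorem preWord_succ (bs : Fin (n + 2) → T) (xs : Fin (n + 1) → T) (m : Fin n) :
    preWord bs xs m.succ = bs 0 * xs 0 * preWord (Fin.tail bs) (Fin.tail xs) m := by
  simp [preWord, Fin.tail, List.ofFn_succ, mul_assoc]

theorem sufWord_zero (bs : Fin (n + 2) → T) (xs : Fin (n + 1) → T) :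
    sufWord bs xs 0 = interWord (Fin.tail bs) (Fin.tail xs) := by
  simp [sufWord, interWord, Fin.tail, List.ofFn_succ]

theorem sufWord_succ (bs : Fin (n + 2) → T) (xs : Fin (n + 1) → T) (m : Fin n) :
    sufWord bs xs m.succ = sufWord (Fin.tail bs) (Fin.tail xs) m := by
  simp [sufWord, Fin.tail, List.ofFn_succ]

end Word

section MatrixUnitWord

open Matrix

variable {ι T : Type*} [Fintype ι] [DecidableEq ι] [Ring T] {n : ℕ}

theorem interWord_single (r c : Fin (n + 1) → ι) (bs : Fin (n + 1) → T)
    (Ms : Fin n → Matrix ι ι T) :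
    interWord (fun m => single (r m) (c m) (bs m)) Ms =
      single (r 0) (c (Fin.last n))
        (interWord bs fun m => Ms m (c m.castSucc) (r m.succ)) := by
  induction n with
  | zero => simp [interWord]
  | succ n ih =>
    rw [interWord_succ_s10, interWord_succ_s10]
    exact (congrArg _ (ih (Fin.tail r) (Fin.tail c) (Fin.tail bs) (Fin.tail Ms))).trans
      (single_mul_mul_single ..)

theorem preWord_single (r c : Fin (n + 1) → ι) (bs : Fin (n + 1) → T)
    (Ms : Fin n → Matrix ι ι T) (m : Fin n) :
    preWord (fun m => single (r m) (c m) (bs m)) Ms m =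
      single (r 0) (c m.castSucc)
        (preWord bs (fun m => Ms m (c m.castSucc) (r m.succ)) m) := by
  induction n with
  | zero => exact m.elim0
  | succ n ih =>
    cases m using Fin.cases with
    | zero => rw [preWord_zero, preWord_zero, Fin.castSucc_zero]
    | succ m =>
      rw [preWord_succ, preWord_succ]
      exact (congrArg _ (ih (Fin.tail r) (Fin.tail c) (Fin.tail bs) (Fin.tail Ms) m)).trans
        (single_mul_mul_single ..)

theorem sufWord_single (r c : Fin (n + 1) → ι) (bs : Fin (n + 1) → T)
    (Ms : Fin n → Matrix ι ι T) (m : Fin n) :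
    sufWord (fun m => single (r m) (c m) (bs m)) Ms m =
      single (r m.succ) (c (Fin.last n))
        (sufWord bs (fun m => Ms m (c m.castSucc) (r m.succ)) m) := by
  induction n with
  | zero => exact m.elim0
  | succ n ih =>
    cases m using Fin.cases with
    | zero =>
      rw [sufWord_zero, sufWord_zero]
      exact interWord_single (Fin.tail r) (Fin.tail c) (Fin.tail bs) (Fin.tail Ms)
    | succ m =>
      rw [sufWord_succ, sufWord_succ]
      exact ih (Fin.tail r) (Fin.tail c) (Fin.tail bs) (Fin.tail Ms) m

end MatrixUnitWord

section MatrixRelations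

open Matrix

variable {R : Type*} [Ring R] [Algebra ℂ R] {d : ℕ} (φ : R →ₗ[ℂ] ℂ)

theorem phid_eq_map_trace_div (X : Matrix (Fin d) (Fin d) R) : phid φ X = φ X.trace / d := by
  simp [phid, trace]

theorem phid_single (p q : Fin d) (w : R) :
    phid φ (single p q w) = if p = q then φ w / d else 0 := by
  split_ifs with hpq <;> simp [phid_eq_map_trace_div, hpq]

theorem phid_mul_single (Z : Matrix (Fin d) (Fin d) R) (p q : Fin d) (w : R) :
    phid φ (Z * single p q w) = φ (Z q p * w) / d := by
  rw [phid_eq_map_trace_div, trace_mul_single, op_smul_eq_mul]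

variable {φ}

theorem MatFamConjRel.natCast_mul_map_apply_mul_interWord [StarRing R]
    {P : Matrix (Fin d) (Fin d) R → Prop} {M Z : Matrix (Fin d) (Fin d) R} {e : Fin 2}
    (hZ : MatFamConjRel (phid φ) P M Z e) {n : ℕ} {r c : Fin (n + 1) → Fin d}
    {bs : Fin (n + 1) → R} {xs : Fin n → R} {i : Fin n → Fin 2}
    (hP : ∀ m, P (single (r m) (c m) (bs m)))
    (hxs : ∀ m, sel M (i m) (c m.castSucc) (r m.succ) = xs m) :
    d * φ (Z (c (Fin.last n)) (r 0) * interWord bs xs) =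
      ∑ m : Fin n, if i m = e ∧ r 0 = c m.castSucc ∧ r m.succ = c (Fin.last n) then
        φ (preWord bs xs m) * φ (sufWord bs xs m) else 0 := by
  have hd : (d : ℂ) ≠ 0 := Nat.cast_ne_zero.2 (Fin.pos (r 0)).ne'
  have hunits : φ (Z (c (Fin.last n)) (r 0) * interWord bs xs) / d =
      ∑ m : Fin n, if i m = e then
        (if r 0 = c m.castSucc then φ (preWord bs xs m) / d else 0) *
          (if r m.succ = c (Fin.last n) then φ (sufWord bs xs m) / d else 0) else 0 := by
    simpa only [interWord_single, preWord_single, sufWord_single, hxs, phid_mul_single,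
      phid_single] using hZ n (fun m => single (r m) (c m) (bs m)) i hP
  rw [div_eq_iff hd] at hunits
  rw [hunits, Finset.sum_mul, Finset.mul_sum]
  refine Finset.sum_congr rfl fun m _ => ?_
  simp only [ite_and]
  split_ifs <;> field_simp <;> simp

end MatrixRelations

section EntryPosition

variable {d : ℕ}

/-- The row in which `a_{kl}^{(ε)}` occurs in the matrix `A^{(ε)}`, for a triple `(k, l, ε)`: it is
`k` for `A` and `l` for `A*`, since taking adjoints transposes. -/
def entryRow (t : Fin d × Fin d × Fin 2) : Fin d := if t.2.2 = 0 then t.1 else t.2.1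

/-- The column in which `a_{kl}^{(ε)}` occurs in the matrix `A^{(ε)}`, for a triple `(k, l, ε)`: it
is `l` for `A` and `k` for `A*`. -/
def entryCol (t : Fin d × Fin d × Fin 2) : Fin d := if t.2.2 = 0 then t.2.1 else t.1

theorem index_eq_iff_entryRow_eq_and_entryCol_eq {s t : Fin d × Fin d × Fin 2} :
    s = t ↔ s.2.2 = t.2.2 ∧ entryRow s = entryRow t ∧ entryCol s = entryCol t := by
  refine ⟨by rintro rfl; simp, ?_⟩
  obtain ⟨k, l, ε⟩ := s
  obtain ⟨k', l', ε'⟩ := t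
  rintro ⟨rfl, hrow, hcol⟩
  by_cases hε : ε = 0 <;> simp_all [entryRow, entryCol]

theorem sel_of_apply_entryRow_entryCol {R : Type*} [Ring R] [StarRing R]
    (a : Fin d → Fin d → R) (t : Fin d × Fin d × Fin 2) :
    sel (Matrix.of a) t.2.2 (entryRow t) (entryCol t) = ent a t := by
  unfold sel ent entryRow entryCol
  split_ifs <;> simp [Matrix.star_apply]

theorem ent_natCast_smul_transpose (N : ℕ) (X : Matrix (Fin d) (Fin d) A)
    (t : Fin d × Fin d × Fin 2) :
    ent (fun i j => (N : ℂ) • X j i) t = (N : ℂ) • sel X t.2.2 (entryCol t) (entryRow t) := by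
  unfold sel ent entryRow entryCol
  split_ifs <;> simp [Matrix.star_apply]

end EntryPosition

theorem entry_conjugate_system_of_matrix_conjugate_system_general
    {d : ℕ} (φ : A →ₗ[ℂ] ℂ) (B : StarSubalgebra ℂ A) (a : Fin d → Fin d → A)
    (X : Matrix (Fin d) (Fin d) A)
    (hX : MatFamConjRel (phid φ) (fun Y => ∀ i j, Y i j ∈ B) (Matrix.of a) X 0)
    (hXstar : MatFamConjRel (phid φ) (fun Y => ∀ i j, Y i j ∈ B) (Matrix.of a) (star X) 1) :
    FamConjRel φ B a (fun i j => (d : ℂ) • X j i) := by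
  intro n bs idx t hbs
  have hsel : ∀ ε, MatFamConjRel (phid φ) (fun Y => ∀ i j, Y i j ∈ B) (Matrix.of a) (sel X ε) ε :=
    Fin.forall_fin_two.2 ⟨hX, hXstar⟩
  let r : Fin (n + 1) → Fin d := Fin.cons (entryRow t) fun m => entryCol (idx m)
  let c : Fin (n + 1) → Fin d := Fin.snoc (fun m => entryRow (idx m)) (entryCol t)
  have hunit_mem : ∀ m i j, Matrix.single (r m) (c m) (bs m) i j ∈ B := fun m =>
    (Matrix.single_mem_matrix B.zero_mem).2 (hbs m)
  have hletter : ∀ m, sel (Matrix.of a) (idx m).2.2 (c m.castSucc) (r m.succ) = ent a (idx m) := by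
    simp [r, c, sel_of_apply_entryRow_entryCol]
  have hrel := (hsel t.2.2).natCast_mul_map_apply_mul_interWord hunit_mem hletter
  simp only [r, c, Fin.cons_zero, Fin.cons_succ, Fin.snoc_last, Fin.snoc_castSucc] at hrel
  rw [ent_natCast_smul_transpose, smul_mul_assoc, map_smul, smul_eq_mul, hrel]
  simp only [index_eq_iff_entryRow_eq_and_entryCol_eq (t := t), eq_comm (a := entryRow t)]

/-- Converse direction of Proposition 4.1, 1°: if `{X, X*}` fulfills the conjugate
relations for `{A, A*}` with respect to `M_d(ℬ)`, then `ξ_ij := d·X_ji` gives a family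
`{ξ_ij, ξ_ij*}` fulfilling the conjugate relations for `{a_ij, a_ij*}` w.r.t. `ℬ`. -/
theorem entry_conjugate_system_of_matrix_conjugate_system
    {d : ℕ} (hd : 0 < d)
    (φ : A →ₗ[ℂ] ℂ)
    (hφ1 : φ 1 = 1)
    (hφpos : ∀ x : A, 0 ≤ φ (star x * x))
    (hφtr : ∀ x y : A, φ (x * y) = φ (y * x))
    (B : StarSubalgebra ℂ A)
    (a : Fin d → Fin d → A)
    (X : Matrix (Fin d) (Fin d) A)
    (hX : MatFamConjRel (phid φ) (fun Y => ∀ i j, Y i j ∈ B) (Matrix.of a) X 0)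
    (hXstar : MatFamConjRel (phid φ) (fun Y => ∀ i j, Y i j ∈ B) (Matrix.of a) (star X) 1) :
    FamConjRel φ B a (fun i j => (d : ℂ) • X j i) :=
  entry_conjugate_system_of_matrix_conjugate_system_general φ B a X hX hXstar
end
end
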